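/- arXiv:2112.10405 — 2 statements merged into one kernel-verified Lean document; each statement's English description precedes it below -/
import Mathlib

section
/- For every p ∈ [0,1], every n ≥ 2 and every x > 0, the martingale M_n satisfies the concentration inequality ℙ(|M_n| ≥ x) ≤ 2·exp(−x²/(3n)). -/
open MeasureTheory ProbabilityTheory Filter Finset
open scoped BoundedContinuousFunction ENNReal NNReal Topology

noncomputable section

variable {Ω : Type*}

/-- Position of the elephant random walk: `S n = X 1 + ⋯ + X n`. -/
def erwS (X : ℕ → Ω → ℝ) (n : ℕ) (ω : Ω) : ℝ :=
  ∑ k ∈ Finset.Icc 1 n, X k ω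

/-- `V n = 4 ∑_{k=1}^{n-1} (S k / k)²`, the approximate conditional Fisher information. -/
def erwV (X : ℕ → Ω → ℝ) (n : ℕ) (ω : Ω) : ℝ :=
  4 * ∑ k ∈ Finset.Icc 1 (n - 1), (erwS X k ω / k) ^ 2

/-- The quasi-maximum likelihood estimator `p̂ n` of the memory parameter. -/
def erwPhat (X : ℕ → Ω → ℝ) (n : ℕ) (ω : Ω) : ℝ :=
  (∑ k ∈ Finset.Icc 1 (n - 1), (erwS X k ω / k) * (X (k + 1) ω + erwS X k ω / k)) /
    (2 * ∑ k ∈ Finset.Icc 1 (n - 1), (erwS X k ω / k) ^ 2)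

/-- The elephant random walk hypotheses with memory parameter `p ∈ [0,1]`:
the steps take values in `{-1, 1}`, are adapted to the filtration `ℱ`
(which plays the role of `σ(X_1, …, X_n)`), and
`E[X_{n+1} | ℱ_n] = (2p - 1) · S_n / n` almost surely. -/
def IsERW {m0 : MeasurableSpace Ω} (μ : Measure Ω) (ℱ : Filtration ℕ m0)
    (X : ℕ → Ω → ℝ) (p : ℝ) : Prop :=
  0 ≤ p ∧ p ≤ 1 ∧
  (∀ n, 1 ≤ n → ∀ ω, X n ω = 1 ∨ X n ω = -1) ∧
  (∀ n, 1 ≤ n → Measurable[ℱ n] (X n)) ∧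
  (∀ n, 1 ≤ n → μ[X (n + 1) | ℱ n] =ᵐ[μ] fun ω => (2 * p - 1) * (erwS X n ω / n))

/-- The martingale `M n = ∑_{k=1}^{n-1} (S k / k) ε_{k+1}` where `ε_{k+1} = X_{k+1} - a S_k / k`. -/
def erwM (X : ℕ → Ω → ℝ) (a : ℝ) (n : ℕ) (ω : Ω) : ℝ :=
  ∑ k ∈ Finset.Icc 1 (n - 1), (erwS X k ω / k) * (X (k + 1) ω - a * (erwS X k ω / k))

/-! Each increment of `M_n` equals `U_k - 𝔼[U_k | ℱ_k]` with `U_k = (S_k / k) X_{k+1} ∈ [-1, 1]`.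
Hoeffding's lemma for the conditional law of `U_k` makes this increment conditionally sub-Gaussian
with variance proxy `1`. Proxies of martingale differences add up, so `M_n` is sub-Gaussian with
proxy `n - 1`, and Chernoff's bound on both tails gives `2 exp(-x² / (2 (n - 1)))`. -/

section ConditionalHoeffding

variable {m m0 : MeasurableSpace Ω} {μ : Measure Ω}

lemma ae_ae_condDistrib_mem {β E : Type*} [MeasurableSpace β] [MeasurableSpace E]
    [StandardBorelSpace E] [Nonempty E] [IsFiniteMeasure μ] {X : Ω → β} {Y : Ω → E}
    (hX : AEMeasurable X μ) (hY : AEMeasurable Y μ) {s : Set E} (hs : MeasurableSet s)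
    (hYs : ∀ᵐ ω ∂μ, Y ω ∈ s) :
    ∀ᵐ ω ∂μ, ∀ᵐ y ∂condDistrib Y X μ (X ω), y ∈ s := by
  have hmap : ∀ᵐ y ∂(condDistrib Y X μ ∘ₘ μ.map X), y ∈ s := by
    rw [condDistrib_comp_map hX hY]
    exact (ae_map_iff hY hs).2 hYs
  exact ae_of_ae_map hX (Measure.ae_ae_of_ae_comp hmap)

lemma integrable_exp_mul_sub_condExp_of_mem_Icc [IsFiniteMeasure μ] (hm : m ≤ m0) {U : Ω → ℝ}
    {a b : ℝ} (hU : AEMeasurable U μ) (hUab : ∀ᵐ ω ∂μ, U ω ∈ Set.Icc a b) (t : ℝ) :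
    Integrable (fun ω ↦ Real.exp (t * (U ω - (μ[U | m]) ω))) μ := by
  have hcondExp : ∀ᵐ ω ∂μ, (μ[U | m]) ω ∈ Set.Icc a b :=
    (convex_Icc a b).condExp_mem hm (Integrable.of_mem_Icc a b hU hUab) isClosed_Icc hUab
  refine integrable_exp_mul_of_mem_Icc (a := a - b) (b := b - a)
    (hU.sub integrable_condExp.aemeasurable) ?_
  filter_upwards [hUab, hcondExp] with ω hω hω'
  exact ⟨sub_le_sub hω.1 hω'.2, sub_le_sub hω.2 hω'.1⟩

lemma condExp_comap_exp_mul_sub_condExp_le_of_mem_Icc [IsFiniteMeasure μ] {β : Type*}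
    [mβ : MeasurableSpace β] {X : Ω → β} {U : Ω → ℝ} {a b : ℝ} (hX : Measurable X)
    (hU : AEMeasurable U μ) (hUab : ∀ᵐ ω ∂μ, U ω ∈ Set.Icc a b) (t : ℝ) :
    μ[fun ω ↦ Real.exp (t * (U ω - (μ[U | mβ.comap X]) ω)) | mβ.comap X] ≤ᵐ[μ]
      fun _ ↦ Real.exp (((‖b - a‖₊ / 2) ^ 2 : ℝ≥0) * t ^ 2 / 2) := by
  let κ : Kernel β ℝ := condDistrib U X μ
  have hmean : μ[U | mβ.comap X] =ᵐ[μ] fun ω ↦ ∫ y, y ∂κ (X ω) :=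
    condExp_ae_eq_integral_condDistrib' hX (Integrable.of_mem_Icc a b hU hUab)
  have hexp : (fun ω ↦ Real.exp (t * (U ω - (μ[U | mβ.comap X]) ω))) =ᵐ[μ]
      fun ω ↦ Real.exp (t * (U ω - ∫ y, y ∂κ (X ω))) := by
    filter_upwards [hmean] with ω hω
    rw [hω]
  have hcentred : StronglyMeasurable fun q : β × ℝ ↦ Real.exp (t * (q.2 - ∫ y, y ∂κ q.1)) := by
    have hmeas : StronglyMeasurable fun x ↦ ∫ y, y ∂κ x := stronglyMeasurable_id.integral_kernel
    exact Real.continuous_exp.comp_stronglyMeasurable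
      ((measurable_snd.stronglyMeasurable.sub (hmeas.comp_measurable measurable_fst)).const_mul t)
  have hmgf : μ[fun ω ↦ Real.exp (t * (U ω - ∫ y, y ∂κ (X ω))) | mβ.comap X] =ᵐ[μ]
      fun ω ↦ mgf (fun y ↦ y - ∫ z, z ∂κ (X ω)) (κ (X ω)) t :=
    condExp_prod_ae_eq_integral_condDistrib hX hU hcentred
      ((integrable_exp_mul_sub_condExp_of_mem_Icc hX.comap_le hU hUab t).congr hexp)
  filter_upwards [condExp_congr_ae hexp, hmgf,
    ae_ae_condDistrib_mem hX.aemeasurable hU measurableSet_Icc hUab] with ω hexp hmgf hmem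
  rw [hexp, hmgf]
  exact (hasSubgaussianMGF_of_mem_Icc aemeasurable_id hmem).mgf_le t

/- Conditioning on `m` is conditioning on the identity map from `Ω` to `Ω` equipped with `m`. The
disintegration is that of the law of the real variable `U`, so that `Ω` need not be standard Borel,
as it has to be for `HasCondSubgaussianMGF`. -/
lemma condExp_exp_mul_sub_condExp_le_of_mem_Icc [IsFiniteMeasure μ] (hm : m ≤ m0) {U : Ω → ℝ}
    {a b : ℝ} (hU : AEMeasurable U μ) (hUab : ∀ᵐ ω ∂μ, U ω ∈ Set.Icc a b) (t : ℝ) :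
    μ[fun ω ↦ Real.exp (t * (U ω - (μ[U | m]) ω)) | m] ≤ᵐ[μ]
      fun _ ↦ Real.exp (((‖b - a‖₊ / 2) ^ 2 : ℝ≥0) * t ^ 2 / 2) := by
  simpa only [MeasurableSpace.comap_id] using
    condExp_comap_exp_mul_sub_condExp_le_of_mem_Icc (mβ := m) (measurable_id'' hm) hU hUab t

end ConditionalHoeffding

section AzumaHoeffding

variable {m m0 : MeasurableSpace Ω} {μ : Measure Ω}

lemma hasSubgaussianMGF_of_condExp_exp_mul_le [IsProbabilityMeasure μ] (hm : m ≤ m0) {D : Ω → ℝ}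
    {c : ℝ≥0} (hD_int : ∀ t, Integrable (fun ω ↦ Real.exp (t * D ω)) μ)
    (hD : ∀ t, μ[fun ω ↦ Real.exp (t * D ω) | m] ≤ᵐ[μ] fun _ ↦ Real.exp (c * t ^ 2 / 2)) :
    HasSubgaussianMGF D c μ where
  integrable_exp_mul := hD_int
  mgf_le t := by
    calc mgf D μ t = ∫ ω, (μ[fun ω ↦ Real.exp (t * D ω) | m]) ω ∂μ := (integral_condExp hm).symm
      _ ≤ ∫ _, Real.exp (c * t ^ 2 / 2) ∂μ :=
        integral_mono_ae integrable_condExp (integrable_const _) (hD t)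
      _ = Real.exp (c * t ^ 2 / 2) := by simp

lemma hasSubgaussianMGF_add_of_condExp_exp_mul_le [IsProbabilityMeasure μ] (hm : m ≤ m0)
    {S D : Ω → ℝ} {cS cD : ℝ≥0} (hSm : StronglyMeasurable[m] S) (hS : HasSubgaussianMGF S cS μ)
    (hD_int : ∀ t, Integrable (fun ω ↦ Real.exp (t * D ω)) μ)
    (hD : ∀ t, μ[fun ω ↦ Real.exp (t * D ω) | m] ≤ᵐ[μ] fun _ ↦ Real.exp (cD * t ^ 2 / 2)) :
    HasSubgaussianMGF (fun ω ↦ S ω + D ω) (cS + cD) μ where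
  integrable_exp_mul :=
    (hS.add (hasSubgaussianMGF_of_condExp_exp_mul_le hm hD_int hD)).integrable_exp_mul
  mgf_le t := by
    have hSD_int : Integrable (fun ω ↦ Real.exp (t * S ω) * Real.exp (t * D ω)) μ := by
      simpa only [mul_add, Real.exp_add] using
        (hS.add (hasSubgaussianMGF_of_condExp_exp_mul_le hm hD_int hD)).integrable_exp_mul t
    have hpull : μ[fun ω ↦ Real.exp (t * S ω) * Real.exp (t * D ω) | m] =ᵐ[μ]
        fun ω ↦ Real.exp (t * S ω) * (μ[fun ω ↦ Real.exp (t * D ω) | m]) ω :=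
      condExp_mul_of_stronglyMeasurable_left
        (Real.continuous_exp.comp_stronglyMeasurable (hSm.const_mul t)) hSD_int (hD_int t)
    calc mgf (fun ω ↦ S ω + D ω) μ t
        = ∫ ω, (μ[fun ω ↦ Real.exp (t * S ω) * Real.exp (t * D ω) | m]) ω ∂μ := by
          simp only [mgf, mul_add, Real.exp_add, integral_condExp hm]
      _ ≤ ∫ ω, Real.exp (t * S ω) * Real.exp (cD * t ^ 2 / 2) ∂μ := by
          refine integral_mono_ae integrable_condExp ((hS.integrable_exp_mul t).mul_const _) ?_
          filter_upwards [hpull, hD t] with ω hpull hD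
          rw [hpull]
          exact mul_le_mul_of_nonneg_left hD (Real.exp_pos _).le
      _ = mgf S μ t * Real.exp (cD * t ^ 2 / 2) := integral_mul_const _ _
      _ ≤ Real.exp (cS * t ^ 2 / 2) * Real.exp (cD * t ^ 2 / 2) := by
          gcongr
          exact hS.mgf_le t
      _ = Real.exp ((cS + cD : ℝ≥0) * t ^ 2 / 2) := by
          rw [← Real.exp_add, NNReal.coe_add]
          ring_nf

lemma hasSubgaussianMGF_sum_sub_condExp_of_mem_Icc [IsProbabilityMeasure μ] {ι : Type*}
    [LinearOrder ι] {ℱ : Filtration ι m0} {U : ι → Ω → ℝ} {a b : ι → ℝ} (s : Finset ι)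
    (hU : ∀ i ∈ s, AEMeasurable (U i) μ)
    (hUℱ : ∀ i ∈ s, ∀ j ∈ s, i < j → StronglyMeasurable[ℱ j] (U i))
    (hUab : ∀ i ∈ s, ∀ᵐ ω ∂μ, U i ω ∈ Set.Icc (a i) (b i)) :
    HasSubgaussianMGF (fun ω ↦ ∑ i ∈ s, (U i ω - (μ[U i | ℱ i]) ω))
      (∑ i ∈ s, (‖b i - a i‖₊ / 2) ^ 2) μ := by
  induction s using Finset.induction_on_max with
  | empty => simp
  | insert j s hlt ih =>
    have hj : j ∉ s := fun h ↦ (hlt j h).false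
    simp only [forall_mem_insert] at hU hUab hUℱ
    have hS : StronglyMeasurable[ℱ j] fun ω ↦ ∑ i ∈ s, (U i ω - (μ[U i | ℱ i]) ω) :=
      Finset.stronglyMeasurable_fun_sum s fun i hi ↦ ((hUℱ.2 i hi).1 (hlt i hi)).sub
        (stronglyMeasurable_condExp.mono (ℱ.mono (hlt i hi).le))
    simp only [sum_insert hj, add_comm (U j _ - _), add_comm ((_ / 2 : ℝ≥0) ^ 2)]
    exact hasSubgaussianMGF_add_of_condExp_exp_mul_le (ℱ.le j) hS
      (ih hU.2 (fun i hi ↦ (hUℱ.2 i hi).2) hUab.2)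
      (integrable_exp_mul_sub_condExp_of_mem_Icc (ℱ.le j) hU.1 hUab.1)
      (condExp_exp_mul_sub_condExp_le_of_mem_Icc (ℱ.le j) hU.1 hUab.1)

lemma measureReal_le_abs_le_of_hasSubgaussianMGF [IsFiniteMeasure μ] {Y : Ω → ℝ} {c : ℝ≥0}
    (hY : HasSubgaussianMGF Y c μ) {x : ℝ} (hx : 0 ≤ x) :
    μ.real {ω | x ≤ |Y ω|} ≤ 2 * Real.exp (-x ^ 2 / (2 * c)) := by
  calc μ.real {ω | x ≤ |Y ω|}
      = μ.real ({ω | x ≤ Y ω} ∪ {ω | x ≤ (-Y) ω}) := by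
        simp only [le_abs, Set.ofPred_or, Pi.neg_apply]
    _ ≤ μ.real {ω | x ≤ Y ω} + μ.real {ω | x ≤ (-Y) ω} := measureReal_union_le _ _
    _ ≤ Real.exp (-x ^ 2 / (2 * c)) + Real.exp (-x ^ 2 / (2 * c)) :=
        add_le_add (hY.measure_ge_le hx) (hY.neg.measure_ge_le hx)
    _ = 2 * Real.exp (-x ^ 2 / (2 * c)) := (two_mul _).symm

end AzumaHoeffding

section ElephantRandomWalk

variable {X : ℕ → Ω → ℝ}

lemma abs_erwS_div_le_one {n : ℕ} {ω : Ω} (hX : ∀ k, 1 ≤ k → |X k ω| ≤ 1) :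
    |erwS X n ω / n| ≤ 1 := by
  have hS : |erwS X n ω| ≤ n := by
    calc |erwS X n ω| ≤ ∑ k ∈ Icc 1 n, |X k ω| := abs_sum_le_sum_abs _ _
      _ ≤ ∑ _k ∈ Icc 1 n, (1 : ℝ) := sum_le_sum fun k hk ↦ hX k (mem_Icc.1 hk).1
      _ = n := by simp
  rw [abs_div, Nat.abs_cast]
  exact div_le_one_of_le₀ hS (Nat.cast_nonneg n)

variable {m0 : MeasurableSpace Ω} {μ : Measure Ω} {ℱ : Filtration ℕ m0}

lemma stronglyMeasurable_erwS_div (hX_meas : ∀ k, 1 ≤ k → StronglyMeasurable[ℱ k] (X k)) (n : ℕ) :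
    StronglyMeasurable[ℱ n] fun ω ↦ erwS X n ω / n := by
  have hS : StronglyMeasurable[ℱ n] fun ω ↦ ∑ k ∈ Icc 1 n, X k ω :=
    Finset.stronglyMeasurable_fun_sum _ fun k hk ↦
      (hX_meas k (mem_Icc.1 hk).1).mono (ℱ.mono (mem_Icc.1 hk).2)
  simpa only [erwS, div_eq_mul_inv] using hS.mul_const (n : ℝ)⁻¹

lemma condExp_erwS_div_mul [IsFiniteMeasure μ] {a : ℝ} {n : ℕ}
    (hX_meas : ∀ k, 1 ≤ k → StronglyMeasurable[ℱ k] (X k))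
    (hX_le : ∀ᵐ ω ∂μ, ∀ k, 1 ≤ k → |X k ω| ≤ 1)
    (hcond : μ[X (n + 1) | ℱ n] =ᵐ[μ] fun ω ↦ a * (erwS X n ω / n)) :
    μ[fun ω ↦ erwS X n ω / n * X (n + 1) ω | ℱ n] =ᵐ[μ]
      fun ω ↦ erwS X n ω / n * (a * (erwS X n ω / n)) := by
  have hX_int : Integrable (X (n + 1)) μ :=
    Integrable.of_bound ((hX_meas (n + 1) n.succ_pos).mono (ℱ.le _)).aestronglyMeasurable 1
      (hX_le.mono fun ω h ↦ h (n + 1) n.succ_pos)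
  have hpull : μ[fun ω ↦ erwS X n ω / n * X (n + 1) ω | ℱ n] =ᵐ[μ]
      fun ω ↦ erwS X n ω / n * (μ[X (n + 1) | ℱ n]) ω :=
    condExp_stronglyMeasurable_mul_of_bound (ℱ.le n)
      (stronglyMeasurable_erwS_div hX_meas n) hX_int 1
      (hX_le.mono fun ω h ↦ abs_erwS_div_le_one h)
  filter_upwards [hpull, hcond] with ω hpull hcond
  rw [hpull, hcond]

lemma erwM_ae_eq_sum_sub_condExp [IsFiniteMeasure μ] {a : ℝ}
    (hX_meas : ∀ k, 1 ≤ k → StronglyMeasurable[ℱ k] (X k))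
    (hX_le : ∀ᵐ ω ∂μ, ∀ k, 1 ≤ k → |X k ω| ≤ 1)
    (hcond : ∀ k, 1 ≤ k → μ[X (k + 1) | ℱ k] =ᵐ[μ] fun ω ↦ a * (erwS X k ω / k)) (n : ℕ) :
    erwM X a n =ᵐ[μ] fun ω ↦ ∑ k ∈ Icc 1 (n - 1), (erwS X k ω / k * X (k + 1) ω -
      (μ[fun ω ↦ erwS X k ω / k * X (k + 1) ω | ℱ k]) ω) := by
  have hcondExp : ∀ᵐ ω ∂μ, ∀ k ∈ Icc 1 (n - 1),
      (μ[fun ω ↦ erwS X k ω / k * X (k + 1) ω | ℱ k]) ω =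
        erwS X k ω / k * (a * (erwS X k ω / k)) :=
    (ae_ball_iff (Finset.countable_toSet _)).2 fun k hk ↦
      condExp_erwS_div_mul hX_meas hX_le (hcond k (mem_Icc.1 hk).1)
  filter_upwards [hcondExp] with ω hω
  exact sum_congr rfl fun k hk ↦ by rw [hω k hk, mul_sub]

theorem hasSubgaussianMGF_erwM [IsProbabilityMeasure μ] {a : ℝ}
    (hX_meas : ∀ k, 1 ≤ k → StronglyMeasurable[ℱ k] (X k))
    (hX_le : ∀ᵐ ω ∂μ, ∀ k, 1 ≤ k → |X k ω| ≤ 1)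
    (hcond : ∀ k, 1 ≤ k → μ[X (k + 1) | ℱ k] =ᵐ[μ] fun ω ↦ a * (erwS X k ω / k)) (n : ℕ) :
    HasSubgaussianMGF (erwM X a n) (n - 1 : ℕ) μ := by
  have hUℱ : ∀ k, StronglyMeasurable[ℱ (k + 1)] fun ω ↦ erwS X k ω / k * X (k + 1) ω := fun k ↦
    ((stronglyMeasurable_erwS_div hX_meas k).mono (ℱ.mono k.le_succ)).mul
      (hX_meas (k + 1) k.succ_pos)
  have hU1 : ∀ k, ∀ᵐ ω ∂μ, erwS X k ω / k * X (k + 1) ω ∈ Set.Icc (-1 : ℝ) 1 := fun k ↦ by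
    filter_upwards [hX_le] with ω hω
    rw [Set.mem_Icc, ← abs_le, abs_mul]
    exact mul_le_one₀ (abs_erwS_div_le_one hω) (abs_nonneg _) (hω (k + 1) k.succ_pos)
  have hsum := hasSubgaussianMGF_sum_sub_condExp_of_mem_Icc (ℱ := ℱ) (Icc 1 (n - 1))
    (fun k _ ↦ ((hUℱ k).mono (ℱ.le _)).aestronglyMeasurable.aemeasurable)
    (fun k _ j _ hkj ↦ (hUℱ k).mono (ℱ.mono hkj)) (fun k _ ↦ hU1 k)
  have hvar : ∑ _k ∈ Icc 1 (n - 1), (‖(1 : ℝ) - -1‖₊ / 2) ^ 2 = ((n - 1 : ℕ) : ℝ≥0) := by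
    have hhalf : ‖(1 : ℝ) - -1‖₊ / 2 = 1 := by
      ext
      norm_num
    simp only [hhalf, one_pow, sum_const, Nat.card_Icc, add_tsub_cancel_right, nsmul_one]
  rw [hvar] at hsum
  exact hsum.congr (erwM_ae_eq_sum_sub_condExp hX_meas hX_le hcond n).symm

theorem erw_M_concentration_general [IsProbabilityMeasure μ] {a : ℝ}
    (hX_meas : ∀ k, 1 ≤ k → StronglyMeasurable[ℱ k] (X k))
    (hX_le : ∀ᵐ ω ∂μ, ∀ k, 1 ≤ k → |X k ω| ≤ 1)
    (hcond : ∀ k, 1 ≤ k → μ[X (k + 1) | ℱ k] =ᵐ[μ] fun ω ↦ a * (erwS X k ω / k))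
    {n : ℕ} (hn : 2 ≤ n) {x : ℝ} (hx : 0 ≤ x) :
    μ.real {ω | x ≤ |erwM X a n ω|} ≤ 2 * Real.exp (-x ^ 2 / (2 * (n - 1))) := by
  simpa only [NNReal.coe_natCast, Nat.cast_pred (zero_lt_two.trans_le hn)] using
    measureReal_le_abs_le_of_hasSubgaussianMGF (hasSubgaussianMGF_erwM hX_meas hX_le hcond n) hx

end ElephantRandomWalk

/-- Concentration inequality for the martingale `M_n`: for every `p ∈ [0,1]`, `n ≥ 2`
and `x > 0`, `P(|M_n| ≥ x) ≤ 2 exp(-x²/(3n))`. -/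
theorem erw_M_concentration
    {m0 : MeasurableSpace Ω} (μ : Measure Ω) [IsProbabilityMeasure μ]
    (ℱ : Filtration ℕ m0) (X : ℕ → Ω → ℝ) (p : ℝ)
    (hERW : IsERW μ ℱ X p) :
    ∀ n, 2 ≤ n → ∀ x : ℝ, 0 < x →
      (μ {ω | x ≤ |erwM X (2 * p - 1) n ω|}).toReal ≤
        2 * Real.exp (-x ^ 2 / (3 * n)) := by
  obtain ⟨-, -, hX, hX_meas, hcond⟩ := hERW
  intro n hn x hx
  have hX_le : ∀ᵐ ω ∂μ, ∀ k, 1 ≤ k → |X k ω| ≤ 1 :=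
    ae_of_all _ fun ω k hk ↦ ((abs_eq zero_le_one).2 (hX k hk ω)).le
  have hn' : (2 : ℝ) ≤ n := by exact_mod_cast hn
  calc μ.real {ω | x ≤ |erwM X (2 * p - 1) n ω|}
      ≤ 2 * Real.exp (-x ^ 2 / (2 * (n - 1))) :=
        erw_M_concentration_general (fun k hk ↦ (hX_meas k hk).stronglyMeasurable) hX_le hcond
          hn hx.le
    _ ≤ 2 * Real.exp (-x ^ 2 / (3 * n)) := by
        rw [neg_div, neg_div]
        gcongr <;> linarith
end
end

section
/- Test of a given memory value: fix p₀ ∈ (0, 3/4). (i) Under the null hypothesis p = p₀, the law of V_n·(p̂_n − p₀)² converges weakly, as n → ∞, to the chi-square distribution with one degree of freedom (the law of ξ² for ξ a standard Gaussian). (ii) Under the alternative, i.e., if the true memory parameter p ∈ [0,1] satisfies p ≠ p₀, then V_n·(p̂_n − p₀)² → +∞ almost surely as n → ∞. -/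
open MeasureTheory ProbabilityTheory Filter Finset
open scoped BoundedContinuousFunction ENNReal NNReal Topology

noncomputable section

variable {Ω : Type*}

/-!
Write `Y k = S k / k`, `a = 2 * p - 1` and `E n = ∑ k < n, (Y k) ^ 2`. The martingale
`M n = ∑ k < n, Y k * (X (k + 1) - a * Y k)` is the numerator of the estimation error, and
`V n * (p̂ n - p₀) ^ 2 = E n * (M n / E n + 2 * (p - p₀)) ^ 2`.

The quadratic variation of `M` is at most `E`, so by Kronecker's lemma `M n = o(E n)` almost surely
once `E n → ∞`; this gives the alternative. For the growth of `E`, expanding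
`S (n + 1) ^ 2 / (n + 1)` yields the energy balance
`n * (Y n) ^ 2 + (1 - 2 * a) * E n = H n + 2 * M n + R n`, with `H` the harmonic numbers and
`(R n) ^ 2 = O(E n)`. It rules out bounded `E`. When `p < 3 / 4`, that is `1 - 2 * a > 0`, it is an
averaging recurrence for `(1 - 2 * a) * E n - H n`, since `(Y n) ^ 2 = E (n + 1) - E n`; hence
`E n ∼ H n / (1 - 2 * a)` and `Y n → 0`.

Both `E n` and the quadratic variation of `M` are therefore equivalent to one deterministic
sequence, and under the null the statistic `(M n) ^ 2 / E n` is asymptotically the square of a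
standard Gaussian. The central limit theorem behind this compares the characteristic function of
`M`, stopped when its quadratic variation becomes too large, with that of a Gaussian of the same
conditional variances, factor by factor.
-/

open Asymptotics

section Sequences

variable {b u : ℕ → ℝ}

lemma sum_range_succ_eq_sub_sum (hb : ∀ k, b k ≠ 0) (u : ℕ → ℝ) (s : ℝ) (n : ℕ) :
    ∑ k ∈ range (n + 1), u k = b n * (∑ k ∈ range (n + 1), (b k)⁻¹ * u k - s)
      - ∑ k ∈ range n, (b (k + 1) - b k) * (∑ j ∈ range (k + 1), (b j)⁻¹ * u j - s) + b 0 * s := by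
  induction n with
  | zero =>
    have := mul_inv_cancel_left₀ (hb 0) (u 0)
    simp only [zero_add, sum_range_one, sum_range_zero]
    linarith
  | succ n ih =>
    rw [sum_range_succ _ (n + 1), ih, sum_range_succ (fun k => (b (k + 1) - b k) * _) n,
      sum_range_succ (fun k => (b k)⁻¹ * u k) (n + 1)]
    linear_combination -mul_inv_cancel_left₀ (hb (n + 1)) (u (n + 1))

lemma abs_sum_range_succ_le (hb : Monotone b) (hb0 : 0 < b 0) {C : ℝ}
    (hC : ∀ n, |∑ k ∈ range n, (b k)⁻¹ * u k| ≤ C) (n : ℕ) :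
    |∑ k ∈ range (n + 1), u k| ≤ 2 * C * b n := by
  have hbpos (k : ℕ) : 0 < b k := hb0.trans_le (hb k.zero_le)
  have hbn := (hbpos n).le
  have hC0 : 0 ≤ C := (abs_nonneg _).trans (hC 0)
  have hlast : |b n * ∑ k ∈ range (n + 1), (b k)⁻¹ * u k| ≤ C * b n := by
    rw [abs_mul, abs_of_nonneg hbn, mul_comm]
    exact mul_le_mul_of_nonneg_right (hC _) hbn
  have hsum : |∑ k ∈ range n, (b (k + 1) - b k) * ∑ j ∈ range (k + 1), (b j)⁻¹ * u j| ≤ C * b n :=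
    calc |∑ k ∈ range n, (b (k + 1) - b k) * ∑ j ∈ range (k + 1), (b j)⁻¹ * u j|
        ≤ ∑ k ∈ range n, (b (k + 1) - b k) * C := by
          refine (abs_sum_le_sum_abs _ _).trans (sum_le_sum fun k _ => ?_)
          have hk : 0 ≤ b (k + 1) - b k := sub_nonneg.2 (hb k.le_succ)
          rw [abs_mul, abs_of_nonneg hk]
          exact mul_le_mul_of_nonneg_left (hC _) hk
      _ = (b n - b 0) * C := by rw [← sum_mul, sum_range_sub]
      _ ≤ C * b n := by nlinarith
  rw [sum_range_succ_eq_sub_sum (fun k => (hbpos k).ne') u 0]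
  simp only [sub_zero, mul_zero, add_zero]
  exact (abs_sub _ _).trans (by linarith)

/-- **Kronecker's lemma**. -/
lemma isLittleO_sum_range_succ_of_tendsto (hb : Monotone b) (hb0 : ∀ k, b k ≠ 0)
    (hbt : Tendsto b atTop atTop) {s : ℝ}
    (hu : Tendsto (fun n => ∑ k ∈ range n, (b k)⁻¹ * u k) atTop (𝓝 s)) :
    (fun n => ∑ k ∈ range (n + 1), u k) =o[atTop] b := by
  have hconst (x : ℝ) : (fun _ : ℕ => x) =o[atTop] b :=
    isLittleO_const_left.2 (.inr (tendsto_norm_atTop_atTop.comp hbt))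
  have hrest : (fun n => ∑ k ∈ range (n + 1), (b k)⁻¹ * u k - s) =o[atTop] fun _ => (1 : ℝ) := by
    rw [isLittleO_one_iff, ← sub_self s]
    exact (hu.comp (tendsto_add_atTop_nat 1)).sub_const s
  have hlast : (fun n => b n * (∑ k ∈ range (n + 1), (b k)⁻¹ * u k - s)) =o[atTop] b := by
    simpa using (isBigO_refl b atTop).mul_isLittleO hrest
  have hsum : (fun n => ∑ k ∈ range n, (b (k + 1) - b k) * (∑ j ∈ range (k + 1), (b j)⁻¹ * u j - s))
      =o[atTop] b := by
    have hinc : (fun n => (b (n + 1) - b n) * (∑ j ∈ range (n + 1), (b j)⁻¹ * u j - s))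
        =o[atTop] fun n => b (n + 1) - b n := by
      simpa using (isBigO_refl (fun n => b (n + 1) - b n) atTop).mul_isLittleO hrest
    have h := hinc.sum_range (fun k => sub_nonneg.2 (hb k.le_succ)) <| by
      simp only [sum_range_sub]
      exact tendsto_atTop_add_const_right _ _ hbt
    simp only [sum_range_sub] at h
    exact h.trans_isBigO ((isBigO_refl b atTop).sub (hconst _).isBigO)
  simp only [sum_range_succ_eq_sub_sum hb0 u s]
  exact (hlast.sub hsum).add (hconst _)

/-- A discrete Gronwall argument: away from the band `|D n| ≤ (ε / 2) * L n`, the drift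
`- c * D n` dominates `F n` and pulls `|D n|` down. -/
lemma isLittleO_of_averaging_recurrence {D F L : ℕ → ℝ} {c : ℝ} (hc : 0 < c) (hL : Monotone L)
    (hLt : Tendsto L atTop atTop) (hF : F =o[atTop] fun n => |D n| + L n)
    (hD : ∀ n : ℕ, n * (D (n + 1) - D n) = F n - c * D n) : D =o[atTop] L := by
  rw [isLittleO_iff]
  intro ε hε
  have hη : 0 < min (c / 2) (c * ε / 4) := by positivity
  obtain ⟨N, hN⟩ := eventually_atTop.1 ((hF.bound hη).and
    ((hLt.eventually_ge_atTop 0).and (eventually_ge_atTop (⌈c⌉₊ + 1))))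
  have hstep (n : ℕ) (hn : N ≤ n) (K : ℝ) (hK : 0 ≤ K) (h : |D n| ≤ K + ε / 2 * L n) :
      |D (n + 1)| ≤ K + ε / 2 * L (n + 1) := by
    obtain ⟨hFn, hLn, hcn⟩ := hN n hn
    have hcn' : c < n := (Nat.le_ceil c).trans_lt (by exact_mod_cast hcn)
    have hn0 : (0 : ℝ) < n := hc.trans hcn'
    have hL' : L n ≤ L (n + 1) := hL n.le_succ
    have hFn' : |F n| ≤ c / 2 * |D n| + c * ε / 4 * L n := by
      rw [Real.norm_eq_abs, Real.norm_of_nonneg (by positivity), mul_add] at hFn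
      exact hFn.trans (add_le_add
        (mul_le_mul_of_nonneg_right (min_le_left _ _) (abs_nonneg _))
        (mul_le_mul_of_nonneg_right (min_le_right _ _) hLn))
    have hmul : n * |D (n + 1)| ≤ n * (K + ε / 2 * L n) :=
      calc n * |D (n + 1)| = |(n - c) * D n + F n| := by
            rw [← abs_of_pos hn0, ← abs_mul, abs_of_pos hn0]
            congr 1
            linear_combination hD n
        _ ≤ (n - c) * |D n| + |F n| := by
            refine (abs_add_le _ _).trans_eq ?_
            rw [abs_mul, abs_of_pos (sub_pos.2 hcn')]
        _ ≤ n * (K + ε / 2 * L n) := by nlinarith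
    have := le_of_mul_le_mul_left hmul hn0
    nlinarith
  have hbound (n : ℕ) (hn : N ≤ n) : |D n| ≤ |D N| + ε / 2 * L n := by
    induction n, hn using Nat.le_induction with
    | base => nlinarith [(hN N le_rfl).2.1]
    | succ n hn ih => exact hstep n hn _ (abs_nonneg _) ih
  have hlarge : ∀ᶠ n in atTop, |D N| ≤ ε / 2 * L n :=
    (hLt.const_mul_atTop (half_pos hε)).eventually_ge_atTop _
  filter_upwards [hlarge, hLt.eventually_ge_atTop 0, eventually_ge_atTop N] with n hn hLn hNn
  rw [Real.norm_eq_abs, Real.norm_of_nonneg hLn]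
  linarith [hbound n hNn]

end Sequences

section ConditionalExpectation

variable {m m0 : MeasurableSpace Ω} {μ : Measure Ω} [IsFiniteMeasure μ]
  {E : Type*} [NormedAddCommGroup E] [NormedSpace ℝ E] [CompleteSpace E]

lemma integral_smul_eq_of_condExp_ae_eq (hm : m ≤ m0) {f g : Ω → ℝ} (hf : Integrable f μ)
    (hfg : μ[f | m] =ᵐ[μ] g) {G : Ω → E} (hG : StronglyMeasurable[m] G) {C : ℝ}
    (hGC : ∀ ω, ‖G ω‖ ≤ C) : ∫ ω, f ω • G ω ∂μ = ∫ ω, g ω • G ω ∂μ := by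
  have hint : Integrable (f • G) μ :=
    hf.smul_bdd C (hG.mono hm).aestronglyMeasurable (ae_of_all _ hGC)
  have hpull := condExp_smul_of_aestronglyMeasurable_right hf hint hG.aestronglyMeasurable
  calc ∫ ω, f ω • G ω ∂μ = ∫ ω, (μ[f • G | m]) ω ∂μ := (integral_condExp hm).symm
    _ = ∫ ω, g ω • G ω ∂μ := integral_congr_ae <| by
      filter_upwards [hpull, hfg] with ω hω hω'
      rw [hω, Pi.smul_apply', hω']

end ConditionalExpectation

/-- A uniformly bounded martingale difference sequence, indexed so that `d k` is the increment
from time `k` to time `k + 1`, together with a version `v k` of its conditional variance. -/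
structure IsBddMartingaleDiff {m0 : MeasurableSpace Ω} (μ : Measure Ω) (ℱ : Filtration ℕ m0)
    (d v : ℕ → Ω → ℝ) (c : ℝ) : Prop where
  measurable_diff : ∀ k, Measurable[ℱ (k + 1)] (d k)
  measurable_var : ∀ k, Measurable[ℱ k] (v k)
  abs_le : ∀ k ω, |d k ω| ≤ c
  var_nonneg : ∀ k ω, 0 ≤ v k ω
  condExp_diff : ∀ k, μ[d k | ℱ k] =ᵐ[μ] 0
  condExp_sq : ∀ k, μ[fun ω => d k ω ^ 2 | ℱ k] =ᵐ[μ] v k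

namespace IsBddMartingaleDiff

variable {m0 : MeasurableSpace Ω} {μ : Measure Ω} {ℱ : Filtration ℕ m0} {d v : ℕ → Ω → ℝ}
  {c : ℝ}

lemma sq_le (hd : IsBddMartingaleDiff μ ℱ d v c) (k : ℕ) (ω : Ω) : d k ω ^ 2 ≤ c ^ 2 :=
  sq_le_sq.2 ((hd.abs_le k ω).trans (le_abs_self c))

lemma integrable_var (hd : IsBddMartingaleDiff μ ℱ d v c) (k : ℕ) : Integrable (v k) μ :=
  integrable_condExp.congr (hd.condExp_sq k)

lemma measurable_sum (hd : IsBddMartingaleDiff μ ℱ d v c) (n : ℕ) :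
    Measurable[ℱ n] fun ω => ∑ k ∈ range n, d k ω :=
  Finset.measurable_fun_sum _ fun k hk =>
    (hd.measurable_diff k).mono (ℱ.mono (mem_range.1 hk)) le_rfl

lemma measurable_sum_var (hd : IsBddMartingaleDiff μ ℱ d v c) (n : ℕ) :
    Measurable[ℱ n] fun ω => ∑ k ∈ range (n + 1), v k ω :=
  Finset.measurable_fun_sum _ fun k hk =>
    (hd.measurable_var k).mono (ℱ.mono (mem_range_succ_iff.1 hk)) le_rfl

lemma abs_sum_le (hd : IsBddMartingaleDiff μ ℱ d v c) (n : ℕ) (ω : Ω) :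
    |∑ k ∈ range n, d k ω| ≤ n * c := by
  refine (abs_sum_le_sum_abs _ _).trans ?_
  simpa using sum_le_card_nsmul (range n) _ c fun k _ => hd.abs_le k ω

variable [IsFiniteMeasure μ]

lemma integrable_diff (hd : IsBddMartingaleDiff μ ℱ d v c) (k : ℕ) : Integrable (d k) μ :=
  .of_bound ((hd.measurable_diff k).mono (ℱ.le _) le_rfl).aestronglyMeasurable c
    (ae_of_all _ (hd.abs_le k))

lemma integrable_sq (hd : IsBddMartingaleDiff μ ℱ d v c) (k : ℕ) :
    Integrable (fun ω => d k ω ^ 2) μ :=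
  .of_bound (((hd.measurable_diff k).mono (ℱ.le _) le_rfl).pow_const 2).aestronglyMeasurable
    (c ^ 2) (ae_of_all _ fun ω => by
      rw [Real.norm_of_nonneg (sq_nonneg _)]
      exact hd.sq_le k ω)

lemma var_ae_le (hd : IsBddMartingaleDiff μ ℱ d v c) (k : ℕ) : ∀ᵐ ω ∂μ, v k ω ≤ c ^ 2 := by
  have h := condExp_mono (m := ℱ k) (hd.integrable_sq k) (integrable_const (c ^ 2))
    (ae_of_all _ (hd.sq_le k))
  rw [condExp_const (ℱ.le k)] at h
  filter_upwards [h, hd.condExp_sq k] with ω hω hω'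
  exact hω'.symm.le.trans hω

section Smul

variable {E : Type*} [NormedAddCommGroup E] [NormedSpace ℝ E] [CompleteSpace E]
  {G : Ω → E} {C : ℝ} {k : ℕ}

lemma integral_diff_smul (hd : IsBddMartingaleDiff μ ℱ d v c) (hG : StronglyMeasurable[ℱ k] G)
    (hGC : ∀ ω, ‖G ω‖ ≤ C) : ∫ ω, d k ω • G ω ∂μ = 0 := by
  simpa using integral_smul_eq_of_condExp_ae_eq (ℱ.le k) (hd.integrable_diff k)
    (hd.condExp_diff k) hG hGC

lemma integral_sq_smul (hd : IsBddMartingaleDiff μ ℱ d v c) (hG : StronglyMeasurable[ℱ k] G)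
    (hGC : ∀ ω, ‖G ω‖ ≤ C) : ∫ ω, d k ω ^ 2 • G ω ∂μ = ∫ ω, v k ω • G ω ∂μ :=
  integral_smul_eq_of_condExp_ae_eq (ℱ.le k) (hd.integrable_sq k) (hd.condExp_sq k) hG hGC

end Smul

lemma integral_sq (hd : IsBddMartingaleDiff μ ℱ d v c) (k : ℕ) :
    ∫ ω, d k ω ^ 2 ∂μ = ∫ ω, v k ω ∂μ := by
  rw [← integral_condExp (ℱ.le k), integral_congr_ae (hd.condExp_sq k)]

lemma mul_predictable (hd : IsBddMartingaleDiff μ ℱ d v c) {ξ : ℕ → Ω → ℝ}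
    (hξ : ∀ k, Measurable[ℱ k] (ξ k)) (hξ1 : ∀ k ω, |ξ k ω| ≤ 1) :
    IsBddMartingaleDiff μ ℱ (fun k ω => ξ k ω * d k ω) (fun k ω => ξ k ω ^ 2 * v k ω) c where
  measurable_diff k := ((hξ k).mono (ℱ.mono k.le_succ) le_rfl).mul (hd.measurable_diff k)
  measurable_var k := ((hξ k).pow_const 2).mul (hd.measurable_var k)
  abs_le k ω := by
    rw [abs_mul]
    exact (mul_le_of_le_one_left (abs_nonneg _) (hξ1 k ω)).trans (hd.abs_le k ω)
  var_nonneg k ω := mul_nonneg (sq_nonneg _) (hd.var_nonneg k ω)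
  condExp_diff k := by
    filter_upwards [condExp_stronglyMeasurable_mul_of_bound (ℱ.le k) (hξ k).stronglyMeasurable
      (hd.integrable_diff k) 1 (ae_of_all _ (hξ1 k)), hd.condExp_diff k] with ω hω hω'
    exact hω.trans (by simp [hω'])
  condExp_sq k := by
    have hξ2 (ω : Ω) : ‖ξ k ω ^ 2‖ ≤ 1 := by
      rw [norm_pow]
      exact pow_le_one₀ (norm_nonneg _) (hξ1 k ω)
    simp only [mul_pow]
    filter_upwards [condExp_stronglyMeasurable_mul_of_bound (ℱ.le k)
      ((hξ k).pow_const 2).stronglyMeasurable (hd.integrable_sq k) 1 (ae_of_all _ hξ2),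
      hd.condExp_sq k] with ω hω hω'
    exact hω.trans (by simp [hω'])

lemma martingale_sum (hd : IsBddMartingaleDiff μ ℱ d v c) :
    Martingale (fun n ω => ∑ k ∈ range n, d k ω) ℱ μ := by
  refine martingale_nat (fun n => (hd.measurable_sum n).stronglyMeasurable)
    (fun n => integrable_finsetSum _ fun k _ => hd.integrable_diff k) fun n => ?_
  have hsum : Integrable (fun ω => ∑ k ∈ range n, d k ω) μ :=
    integrable_finsetSum _ fun k _ => hd.integrable_diff k
  have hadd := condExp_add hsum (hd.integrable_diff n) (ℱ n)
  rw [condExp_of_stronglyMeasurable (ℱ.le n) (hd.measurable_sum n).stronglyMeasurable hsum] at hadd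
  simp only [sum_range_succ]
  filter_upwards [hadd, hd.condExp_diff n] with ω hω hω'
  exact (hω.trans (by simp [hω'])).symm

lemma integrable_sum_sq (hd : IsBddMartingaleDiff μ ℱ d v c) (n : ℕ) :
    Integrable (fun ω => (∑ k ∈ range n, d k ω) ^ 2) μ :=
  .of_bound (((hd.measurable_sum n).mono (ℱ.le n) le_rfl).pow_const 2).aestronglyMeasurable
    ((n * c) ^ 2) (ae_of_all _ fun ω => by
      rw [norm_pow]
      exact pow_le_pow_left₀ (norm_nonneg _) (hd.abs_sum_le n ω) 2)

lemma integral_sum_sq (hd : IsBddMartingaleDiff μ ℱ d v c) (n : ℕ) :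
    ∫ ω, (∑ k ∈ range n, d k ω) ^ 2 ∂μ = ∫ ω, ∑ k ∈ range n, v k ω ∂μ := by
  rw [integral_finsetSum _ fun k _ => hd.integrable_var k]
  induction n with
  | zero => simp
  | succ n ih =>
    have hmeas := (hd.measurable_sum n).const_mul 2
    have hbdd (ω : Ω) : ‖2 * ∑ k ∈ range n, d k ω‖ ≤ 2 * (n * c) := by
      rw [norm_mul, Real.norm_two]
      exact mul_le_mul_of_nonneg_left (hd.abs_sum_le n ω) two_pos.le
    have hcross : ∫ ω, d n ω * (2 * ∑ k ∈ range n, d k ω) ∂μ = 0 :=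
      hd.integral_diff_smul hmeas.stronglyMeasurable hbdd
    have hint : Integrable (fun ω => d n ω * (2 * ∑ k ∈ range n, d k ω)) μ :=
      (hd.integrable_diff n).mul_bdd (hmeas.mono (ℱ.le n) le_rfl).aestronglyMeasurable
        (ae_of_all _ hbdd)
    calc ∫ ω, (∑ k ∈ range (n + 1), d k ω) ^ 2 ∂μ
        = ∫ ω, ((∑ k ∈ range n, d k ω) ^ 2 + d n ω * (2 * ∑ k ∈ range n, d k ω)
            + d n ω ^ 2) ∂μ := by
          congr 1 with ω
          rw [sum_range_succ]
          ring
      _ = ∑ k ∈ range (n + 1), ∫ ω, v k ω ∂μ := by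
          rw [integral_add ((hd.integrable_sum_sq n).fun_add hint) (hd.integrable_sq n),
            integral_add (hd.integrable_sum_sq n) hint, hcross, ih, add_zero, hd.integral_sq,
            sum_range_succ]

lemma ae_exists_tendsto_sum (hd : IsBddMartingaleDiff μ ℱ d v c) {K : ℝ}
    (hK : ∀ n, ∫ ω, ∑ k ∈ range n, v k ω ∂μ ≤ K) :
    ∀ᵐ ω ∂μ, ∃ s, Tendsto (fun n => ∑ k ∈ range n, d k ω) atTop (𝓝 s) := by
  refine hd.martingale_sum.submartingale.exists_ae_tendsto_of_bdd
    (R := (μ.real Set.univ + K).toNNReal) fun n => ?_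
  have hint := hd.martingale_sum.integrable n
  rw [eLpNorm_one_eq_lintegral_enorm, ← ofReal_integral_norm_eq_lintegral_enorm hint]
  refine ENNReal.ofReal_le_ofReal ?_
  calc ∫ ω, ‖∑ k ∈ range n, d k ω‖ ∂μ ≤ ∫ ω, (1 + (∑ k ∈ range n, d k ω) ^ 2) ∂μ := by
        refine integral_mono hint.norm ((integrable_const _).fun_add (hd.integrable_sum_sq n))
          fun ω => ?_
        rw [Real.norm_eq_abs, ← sq_abs (∑ k ∈ range n, d k ω)]
        nlinarith [sq_nonneg (|∑ k ∈ range n, d k ω| - 1)]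
    _ = μ.real Set.univ + ∫ ω, ∑ k ∈ range n, v k ω ∂μ := by
        rw [integral_add (integrable_const _) (hd.integrable_sum_sq n), hd.integral_sum_sq]
        simp
    _ ≤ μ.real Set.univ + K := by linarith [hK n]

lemma ae_exists_tendsto_sum_div (hd : IsBddMartingaleDiff μ ℱ d v c) {w : ℕ → Ω → ℝ}
    (hw : ∀ k, Measurable[ℱ k] (w k)) (hvw : ∀ k ω, v k ω ≤ w k ω) :
    ∀ᵐ ω ∂μ, ∃ s, Tendsto (fun n => ∑ k ∈ range n,
      (1 + ∑ j ∈ range (k + 1), w j ω)⁻¹ * d k ω) atTop (𝓝 s) := by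
  have hw0 (k : ℕ) (ω : Ω) : 0 ≤ w k ω := (hd.var_nonneg k ω).trans (hvw k ω)
  have hW1 (k : ℕ) (ω : Ω) : 1 ≤ 1 + ∑ j ∈ range k, w j ω :=
    le_add_of_nonneg_right (sum_nonneg fun j _ => hw0 j ω)
  have hWmeas (k : ℕ) : Measurable[ℱ k] fun ω => (1 + ∑ j ∈ range (k + 1), w j ω)⁻¹ :=
    ((Finset.measurable_fun_sum _ fun j hj =>
      (hw j).mono (ℱ.mono (mem_range_succ_iff.1 hj)) le_rfl).const_add 1).inv
  have hterm (k : ℕ) (ω : Ω) : (1 + ∑ j ∈ range (k + 1), w j ω)⁻¹ ^ 2 * v k ω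
      ≤ (1 + ∑ j ∈ range k, w j ω)⁻¹ - (1 + ∑ j ∈ range (k + 1), w j ω)⁻¹ := by
    have hk := hW1 k ω
    have hk0 := hw0 k ω
    rw [sum_range_succ]
    set W := ∑ j ∈ range k, w j ω
    have hpos : 0 < 1 + (W + w k ω) := by linarith
    calc (1 + (W + w k ω))⁻¹ ^ 2 * v k ω ≤ w k ω / ((1 + W) * (1 + (W + w k ω))) := by
          rw [inv_pow, inv_mul_eq_div, sq]
          gcongr
          · exact hvw k ω
          · linarith
      _ = (1 + W)⁻¹ - (1 + (W + w k ω))⁻¹ := by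
          field_simp
          ring
  refine (hd.mul_predictable hWmeas fun k ω => ?_).ae_exists_tendsto_sum (K := μ.real Set.univ)
    fun n => ?_
  · rw [abs_of_nonneg (inv_nonneg.2 (zero_le_one.trans (hW1 _ ω)))]
    exact inv_le_one_of_one_le₀ (hW1 _ ω)
  · have hsum (ω : Ω) : ‖∑ k ∈ range n, (1 + ∑ j ∈ range (k + 1), w j ω)⁻¹ ^ 2 * v k ω‖ ≤ 1 := by
      rw [Real.norm_of_nonneg (sum_nonneg fun k _ => mul_nonneg (sq_nonneg _) (hd.var_nonneg k ω))]
      refine (sum_le_sum fun k _ => hterm k ω).trans ?_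
      rw [sum_range_sub' fun k => (1 + ∑ j ∈ range k, w j ω)⁻¹]
      simpa using zero_le_one.trans (hW1 n ω)
    simpa using (le_abs_self _).trans (norm_integral_le_of_norm_le_const (ae_of_all μ hsum))

lemma ae_sum_isBigO (hd : IsBddMartingaleDiff μ ℱ d v c) {w : ℕ → Ω → ℝ}
    (hw : ∀ k, Measurable[ℱ k] (w k)) (hvw : ∀ k ω, v k ω ≤ w k ω) :
    ∀ᵐ ω ∂μ, (fun n => ∑ k ∈ range n, d k ω) =O[atTop] fun n => 1 + ∑ k ∈ range n, w k ω := by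
  filter_upwards [hd.ae_exists_tendsto_sum_div hw hvw] with ω ⟨s, hs⟩
  obtain ⟨C, hC⟩ := hs.norm.bddAbove_range
  have hw0 (k : ℕ) : 0 ≤ w k ω := (hd.var_nonneg k ω).trans (hvw k ω)
  have hmono : Monotone fun n => 1 + ∑ k ∈ range (n + 1), w k ω :=
    monotone_nat_of_le_succ fun n => by simpa [sum_range_succ _ (n + 1)] using hw0 _
  rw [← map_add_atTop_eq_nat 1, isBigO_map]
  refine .of_bound (2 * C) (.of_forall fun n => ?_)
  refine (abs_sum_range_succ_le hmono (by simpa using add_pos_of_pos_of_nonneg one_pos (hw0 0))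
    (fun n => hC ⟨n, rfl⟩) n).trans ?_
  have hC0 : 0 ≤ C := (norm_nonneg _).trans (hC ⟨0, rfl⟩)
  exact mul_le_mul_of_nonneg_left (le_abs_self _) (by positivity)

/-- A strong law of large numbers for martingales. -/
lemma ae_sum_isLittleO (hd : IsBddMartingaleDiff μ ℱ d v c) {w : ℕ → Ω → ℝ}
    (hw : ∀ k, Measurable[ℱ k] (w k)) (hvw : ∀ k ω, v k ω ≤ w k ω) :
    ∀ᵐ ω ∂μ, Tendsto (fun n => ∑ k ∈ range n, w k ω) atTop atTop →
      (fun n => ∑ k ∈ range n, d k ω) =o[atTop] fun n => ∑ k ∈ range n, w k ω := by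
  filter_upwards [hd.ae_exists_tendsto_sum_div hw hvw] with ω ⟨s, hs⟩ hW
  have hw0 (k : ℕ) : 0 ≤ w k ω := (hd.var_nonneg k ω).trans (hvw k ω)
  have hmono : Monotone fun n => 1 + ∑ k ∈ range (n + 1), w k ω :=
    monotone_nat_of_le_succ fun n => by simpa [sum_range_succ _ (n + 1)] using hw0 _
  have hone : (fun _ => (1 : ℝ)) =O[atTop] fun n => ∑ k ∈ range n, w k ω :=
    (isLittleO_const_left.2 (.inr (tendsto_norm_atTop_atTop.comp hW))).isBigO
  refine IsLittleO.trans_isBigO ?_ (hone.add (isBigO_refl _ _))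
  rw [← map_add_atTop_eq_nat 1, isLittleO_map]
  exact isLittleO_sum_range_succ_of_tendsto hmono
    (fun n => (add_pos_of_pos_of_nonneg one_pos (sum_nonneg fun k _ => hw0 k)).ne')
    (tendsto_atTop_add_const_left _ 1 (hW.comp (tendsto_add_atTop_nat 1))) hs

end IsBddMartingaleDiff

section CharacteristicFunction

/-- The error in the second-order approximation `exp (i x) - exp (-s) ≈ i x - x² / 2 + s`, where
`s` has the order of `x²`. -/
def charRemainder (x s : ℝ) : ℂ :=
  Complex.exp (Complex.I * x) - Real.exp (-s) - (x * Complex.I - x ^ 2 / 2 + s)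

lemma norm_charRemainder_le {x s : ℝ} (hx : |x| ≤ 1) (hs : 0 ≤ s) :
    ‖charRemainder x s‖ ≤ |x| ^ 3 + s ^ 2 := by
  have hIx : ‖Complex.I * x‖ = |x| := by simp
  have hexpI : ‖Complex.exp (Complex.I * x) - (1 + x * Complex.I - x ^ 2 / 2)‖ ≤ |x| ^ 3 := by
    have h := Complex.exp_bound (hIx.trans_le hx) (n := 3) (by norm_num)
    have hsum : ∑ m ∈ range 3, (Complex.I * x) ^ m / (m.factorial : ℂ)
        = 1 + x * Complex.I - x ^ 2 / 2 := by
      simp only [sum_range_succ, sum_range_zero, mul_pow, Complex.I_sq, Nat.factorial]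
      push_cast
      ring
    rw [hsum, hIx] at h
    refine h.trans (mul_le_of_le_one_right (by positivity) ?_)
    norm_num [Nat.factorial]
  have hexp : |Real.exp (-s) - (1 - s)| ≤ s ^ 2 := by
    have hinv : Real.exp (-s) * (1 + s) ≤ 1 := by
      rw [Real.exp_neg, inv_mul_le_one₀ (Real.exp_pos s), add_comm]
      exact Real.add_one_le_exp s
    rw [abs_of_nonneg (by linarith [Real.add_one_le_exp (-s)])]
    nlinarith [pow_nonneg hs 3]
  calc ‖charRemainder x s‖ = ‖(Complex.exp (Complex.I * x) - (1 + x * Complex.I - x ^ 2 / 2))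
        - ((Real.exp (-s) - (1 - s) : ℝ) : ℂ)‖ := by
        rw [charRemainder]
        congr 1
        push_cast
        ring
    _ ≤ |x| ^ 3 + s ^ 2 := (norm_sub_le _ _).trans <| add_le_add hexpI <| by
        rwa [Complex.norm_real, Real.norm_eq_abs]

/-- `exp (i r ∑ d)` divided by the Gaussian factor `exp (-r² ∑ v / 2)`: for a martingale
difference sequence `d` with conditional variances `v`, this process is almost a martingale. -/
def compensatedExp (d v : ℕ → Ω → ℝ) (r : ℝ) (n : ℕ) (ω : Ω) : ℂ :=
  Complex.exp (Complex.I * (r * ∑ k ∈ range n, d k ω : ℝ)) *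
    Real.exp (r ^ 2 / 2 * ∑ k ∈ range n, v k ω)

/-- The part of `compensatedExp d v r (n + 1)` that is known at time `n`: all of it except the
factor `exp (i r d n)`. -/
def predictableExp (d v : ℕ → Ω → ℝ) (r : ℝ) (n : ℕ) (ω : Ω) : ℂ :=
  Complex.exp (Complex.I * (r * ∑ k ∈ range n, d k ω : ℝ)) *
    Real.exp (r ^ 2 / 2 * ∑ k ∈ range (n + 1), v k ω)

variable (d v : ℕ → Ω → ℝ) (r : ℝ) (n : ℕ) (ω : Ω)

lemma norm_compensatedExp :
    ‖compensatedExp d v r n ω‖ = Real.exp (r ^ 2 / 2 * ∑ k ∈ range n, v k ω) := by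
  rw [compensatedExp, norm_mul, Complex.norm_exp_I_mul_ofReal, one_mul, Complex.norm_real,
    Real.norm_of_nonneg (Real.exp_nonneg _)]

lemma norm_predictableExp :
    ‖predictableExp d v r n ω‖ = Real.exp (r ^ 2 / 2 * ∑ k ∈ range (n + 1), v k ω) := by
  rw [predictableExp, norm_mul, Complex.norm_exp_I_mul_ofReal, one_mul, Complex.norm_real,
    Real.norm_of_nonneg (Real.exp_nonneg _)]

lemma compensatedExp_eq_predictableExp_mul :
    compensatedExp d v r n ω = predictableExp d v r n ω * Real.exp (-(r ^ 2 / 2 * v n ω)) := by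
  rw [compensatedExp, predictableExp, mul_assoc, ← Complex.ofReal_mul, ← Real.exp_add,
    sum_range_succ, mul_add, add_neg_cancel_right]

lemma compensatedExp_succ :
    compensatedExp d v r (n + 1) ω
      = predictableExp d v r n ω * Complex.exp (Complex.I * (r * d n ω : ℝ)) := by
  rw [compensatedExp, predictableExp, sum_range_succ (d · ω), mul_add r, Complex.ofReal_add,
    mul_add Complex.I, Complex.exp_add]
  ring

lemma compensatedExp_succ_sub :
    compensatedExp d v r (n + 1) ω - compensatedExp d v r n ω =
      r * Complex.I * (d n ω • predictableExp d v r n ω)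
        - r ^ 2 / 2 * (d n ω ^ 2 • predictableExp d v r n ω)
        + r ^ 2 / 2 * (v n ω • predictableExp d v r n ω)
        + predictableExp d v r n ω * charRemainder (r * d n ω) (r ^ 2 / 2 * v n ω) := by
  rw [compensatedExp_succ, compensatedExp_eq_predictableExp_mul, charRemainder]
  simp only [Complex.real_smul]
  push_cast
  ring

end CharacteristicFunction

namespace IsBddMartingaleDiff

variable {m0 : MeasurableSpace Ω} {μ : Measure Ω} {ℱ : Filtration ℕ m0}
  {d v : ℕ → Ω → ℝ} {c : ℝ}

section FiniteMeasure

variable [IsFiniteMeasure μ]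

lemma integrable_compensatedExp (hd : IsBddMartingaleDiff μ ℱ d v c) {R : ℝ}
    (hR : ∀ n ω, ∑ k ∈ range n, v k ω ≤ R) (r : ℝ) (n : ℕ) :
    Integrable (compensatedExp d v r n) μ := by
  have hmeasV : Measurable fun ω => ∑ k ∈ range n, v k ω :=
    Finset.measurable_fun_sum _ fun k _ => (hd.measurable_var k).mono (ℱ.le k) le_rfl
  have hmeasM := (hd.measurable_sum n).mono (ℱ.le n) le_rfl
  refine .of_bound (C := Real.exp (r ^ 2 / 2 * R)) ?_ (ae_of_all _ fun ω => ?_)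
  · unfold compensatedExp
    fun_prop
  · rw [norm_compensatedExp]
    exact Real.exp_le_exp.2 (mul_le_mul_of_nonneg_left (hR n ω) (by positivity))

lemma integral_compensatedExp_succ_sub (hd : IsBddMartingaleDiff μ ℱ d v c) {R : ℝ}
    (hR : ∀ n ω, ∑ k ∈ range n, v k ω ≤ R) (r : ℝ) (n : ℕ) :
    ∫ ω, compensatedExp d v r (n + 1) ω ∂μ - ∫ ω, compensatedExp d v r n ω ∂μ =
      ∫ ω, predictableExp d v r n ω * charRemainder (r * d n ω) (r ^ 2 / 2 * v n ω) ∂μ := by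
  set G := predictableExp d v r n with hGdef
  have hGmeas : StronglyMeasurable[ℱ n] G := by
    have hM := hd.measurable_sum n
    have hV := hd.measurable_sum_var n
    exact Measurable.stronglyMeasurable (by unfold G predictableExp; fun_prop)
  have hGle (ω : Ω) : ‖G ω‖ ≤ Real.exp (r ^ 2 / 2 * R) := by
    rw [hGdef, norm_predictableExp]
    exact Real.exp_le_exp.2 (mul_le_mul_of_nonneg_left (hR _ ω) (by positivity))
  have hint {f : Ω → ℝ} (hf : Integrable f μ) : Integrable (fun ω => f ω • G ω) μ :=
    hf.smul_bdd _ (hGmeas.mono (ℱ.le n)).aestronglyMeasurable (ae_of_all _ hGle)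
  have hint_diff := (hint (hd.integrable_diff n)).const_mul (r * Complex.I)
  have hint_sq := (hint (hd.integrable_sq n)).const_mul (r ^ 2 / 2 : ℂ)
  have hint_var := (hint (hd.integrable_var n)).const_mul (r ^ 2 / 2 : ℂ)
  have hint_sub : Integrable (fun ω => r * Complex.I * (d n ω • G ω)
      - r ^ 2 / 2 * (d n ω ^ 2 • G ω)) μ := hint_diff.sub hint_sq
  have hU := hd.integrable_compensatedExp hR r
  have hU_sub : Integrable (fun ω => compensatedExp d v r (n + 1) ω - compensatedExp d v r n ω) μ :=
    (hU (n + 1)).sub (hU n)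
  have hmain : ∫ ω, (r * Complex.I * (d n ω • G ω) - r ^ 2 / 2 * (d n ω ^ 2 • G ω)
      + r ^ 2 / 2 * (v n ω • G ω)) ∂μ = 0 := by
    rw [integral_add hint_sub hint_var, integral_sub hint_diff hint_sq]
    simp only [integral_const_mul, hd.integral_diff_smul hGmeas hGle,
      hd.integral_sq_smul hGmeas hGle]
    ring
  rw [← integral_sub (hU (n + 1)) (hU n), ← sub_zero (∫ ω, _ ∂μ), ← hmain,
    ← integral_sub hU_sub (hint_sub.fun_add hint_var)]
  refine integral_congr_ae (ae_of_all _ fun ω => ?_)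
  simp only [compensatedExp_succ_sub, ← hGdef]
  ring

lemma norm_integral_compensatedExp_succ_sub_le (hd : IsBddMartingaleDiff μ ℱ d v c) {r R : ℝ}
    (hr : |r| * c ≤ 1) (hR : ∀ n ω, ∑ k ∈ range n, v k ω ≤ R) (n : ℕ) :
    ‖∫ ω, compensatedExp d v r (n + 1) ω ∂μ - ∫ ω, compensatedExp d v r n ω ∂μ‖
      ≤ 2 * Real.exp (r ^ 2 / 2 * R) * |r| ^ 3 * c * ∫ ω, v n ω ∂μ := by
  set K := Real.exp (r ^ 2 / 2 * R)
  have hintegrand : ∀ᵐ ω ∂μ, ‖predictableExp d v r n ω *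
      charRemainder (r * d n ω) (r ^ 2 / 2 * v n ω)‖ ≤ K * (|r| ^ 3 * c * (d n ω ^ 2 + v n ω)) := by
    filter_upwards [hd.var_ae_le n] with ω hω
    have hc : 0 ≤ c := (abs_nonneg _).trans (hd.abs_le n ω)
    have hv := hd.var_nonneg n ω
    have hdle := hd.abs_le n ω
    have hcube : |r * d n ω| ^ 3 ≤ |r| ^ 3 * c * d n ω ^ 2 := by
      rw [abs_mul, mul_pow, pow_succ' |d n ω|, sq_abs, mul_assoc]
      gcongr
    have hquad : (r ^ 2 / 2 * v n ω) ^ 2 ≤ |r| ^ 3 * c * v n ω :=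
      calc (r ^ 2 / 2 * v n ω) ^ 2 ≤ |r| ^ 4 * v n ω * v n ω := by
            rw [← sq_abs r]
            nlinarith [sq_nonneg (|r| ^ 2 * v n ω)]
        _ ≤ |r| ^ 4 * c ^ 2 * v n ω := by gcongr
        _ = |r| * c * (|r| ^ 3 * c * v n ω) := by ring
        _ ≤ |r| ^ 3 * c * v n ω := mul_le_of_le_one_left (by positivity) hr
    have hx : |r * d n ω| ≤ 1 := by
      rw [abs_mul]
      exact (mul_le_mul_of_nonneg_left hdle (abs_nonneg r)).trans hr
    rw [norm_mul, norm_predictableExp]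
    refine mul_le_mul (Real.exp_le_exp.2 (mul_le_mul_of_nonneg_left (hR _ ω) (by positivity)))
      ((norm_charRemainder_le hx (by positivity)).trans ?_) (norm_nonneg _) (Real.exp_nonneg _)
    linarith
  rw [hd.integral_compensatedExp_succ_sub hR]
  have hint := ((hd.integrable_sq n).fun_add (hd.integrable_var n)).const_mul (|r| ^ 3 * c)
  refine (norm_integral_le_of_norm_le (hint.const_mul K) hintegrand).trans_eq ?_
  rw [integral_const_mul, integral_const_mul, integral_add (hd.integrable_sq n)
    (hd.integrable_var n), hd.integral_sq]
  ring

end FiniteMeasure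

lemma norm_integral_compensatedExp_sub_one_le [IsProbabilityMeasure μ]
    (hd : IsBddMartingaleDiff μ ℱ d v c) {r R : ℝ} (hr : |r| * c ≤ 1)
    (hR : ∀ n ω, ∑ k ∈ range n, v k ω ≤ R) (n : ℕ) :
    ‖∫ ω, compensatedExp d v r n ω ∂μ - 1‖ ≤ 2 * Real.exp (r ^ 2 / 2 * R) * |r| ^ 3 * c * R := by
  have hsum : ∫ ω, compensatedExp d v r n ω ∂μ - 1 = ∑ k ∈ range n,
      (∫ ω, compensatedExp d v r (k + 1) ω ∂μ - ∫ ω, compensatedExp d v r k ω ∂μ) := by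
    rw [sum_range_sub fun k => ∫ ω, compensatedExp d v r k ω ∂μ]
    simp [compensatedExp]
  have hc : 0 ≤ c := by
    obtain ⟨ω⟩ := nonempty_of_isProbabilityMeasure μ
    exact (abs_nonneg _).trans (hd.abs_le 0 ω)
  have hvar : ∑ k ∈ range n, ∫ ω, v k ω ∂μ ≤ R := by
    rw [← integral_finsetSum _ fun k _ => hd.integrable_var k]
    refine (integral_mono (integrable_finsetSum _ fun k _ => hd.integrable_var k)
      (integrable_const R) (hR n)).trans_eq (by simp)
  calc _ ≤ ∑ k ∈ range n, 2 * Real.exp (r ^ 2 / 2 * R) * |r| ^ 3 * c * ∫ ω, v k ω ∂μ := by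
        rw [hsum]
        exact norm_sum_le_of_le _ fun k _ => hd.norm_integral_compensatedExp_succ_sub_le hr hR k
    _ ≤ _ := by
        rw [← mul_sum]
        exact mul_le_mul_of_nonneg_left hvar (by positivity)

end IsBddMartingaleDiff

section VarianceCutoff

/-- Indicator that the accumulated conditional variance, including the one of the upcoming step
`k`, does not exceed `R`; multiplying the increments by it stops the martingale in time to keep
its total conditional variance below `R`. -/
def varCutoff (v : ℕ → Ω → ℝ) (R : ℝ) (k : ℕ) (ω : Ω) : ℝ :=
  if ∑ j ∈ range (k + 1), v j ω ≤ R then 1 else 0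

variable {v : ℕ → Ω → ℝ} {R : ℝ} {ω : Ω}

lemma abs_varCutoff_le_one (v : ℕ → Ω → ℝ) (R : ℝ) (k : ℕ) (ω : Ω) : |varCutoff v R k ω| ≤ 1 := by
  unfold varCutoff
  split_ifs <;> simp

lemma varCutoff_eq_one (hv : ∀ k, 0 ≤ v k ω) {k n : ℕ} (hkn : k < n)
    (hn : ∑ j ∈ range n, v j ω ≤ R) : varCutoff v R k ω = 1 :=
  if_pos ((sum_le_sum_of_subset_of_nonneg (range_mono hkn) fun j _ _ => hv j).trans hn)

lemma sum_varCutoff_sq_mul_le (hR : 0 ≤ R) (hv : ∀ k, 0 ≤ v k ω) (n : ℕ) :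
    ∑ k ∈ range n, varCutoff v R k ω ^ 2 * v k ω ≤ R := by
  induction n with
  | zero => simpa using hR
  | succ n ih =>
    by_cases hn : ∑ j ∈ range (n + 1), v j ω ≤ R
    · refine (sum_le_sum fun k _ => ?_).trans hn
      refine mul_le_of_le_one_left (hv k) ?_
      rw [← sq_abs]
      exact pow_le_one₀ (abs_nonneg _) (abs_varCutoff_le_one v R k ω)
    · rwa [sum_range_succ, varCutoff, if_neg hn, zero_pow two_ne_zero, zero_mul, add_zero]

/-- `compensatedExp` for the martingale stopped by `varCutoff v R`. -/
def stoppedCompensatedExp (d v : ℕ → Ω → ℝ) (R r : ℝ) (n : ℕ) (ω : Ω) : ℂ :=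
  compensatedExp (fun k ω => varCutoff v R k ω * d k ω)
    (fun k ω => varCutoff v R k ω ^ 2 * v k ω) r n ω

lemma stoppedCompensatedExp_eq (hv : ∀ k, 0 ≤ v k ω) (d : ℕ → Ω → ℝ) (r : ℝ) {n : ℕ}
    (hn : ∑ j ∈ range n, v j ω ≤ R) :
    stoppedCompensatedExp d v R r n ω = compensatedExp d v r n ω := by
  have hone (k : ℕ) (hk : k ∈ range n) : varCutoff v R k ω = 1 :=
    varCutoff_eq_one hv (mem_range.1 hk) hn
  have hd : ∑ k ∈ range n, varCutoff v R k ω * d k ω = ∑ k ∈ range n, d k ω :=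
    sum_congr rfl fun k hk => by rw [hone k hk, one_mul]
  have hvar : ∑ k ∈ range n, varCutoff v R k ω ^ 2 * v k ω = ∑ k ∈ range n, v k ω :=
    sum_congr rfl fun k hk => by rw [hone k hk, one_pow, one_mul]
  simp only [stoppedCompensatedExp, compensatedExp, hd, hvar]

lemma norm_stoppedCompensatedExp_le (hR : 0 ≤ R) (hv : ∀ k, 0 ≤ v k ω) (d : ℕ → Ω → ℝ) (r : ℝ)
    (n : ℕ) : ‖stoppedCompensatedExp d v R r n ω‖ ≤ Real.exp (r ^ 2 / 2 * R) := by
  rw [stoppedCompensatedExp, norm_compensatedExp, Real.exp_le_exp]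
  exact mul_le_mul_of_nonneg_left (sum_varCutoff_sq_mul_le hR hv n) (by positivity)

lemma norm_exp_sub_mul_compensatedExp (d v : ℕ → Ω → ℝ) (r s : ℝ) (n : ℕ) (ω : Ω) :
    ‖Complex.exp (Complex.I * (r * ∑ k ∈ range n, d k ω : ℝ))
      - Real.exp (-s) * compensatedExp d v r n ω‖
      = |1 - Real.exp (r ^ 2 / 2 * ∑ k ∈ range n, v k ω - s)| := by
  rw [compensatedExp, mul_left_comm, ← Complex.ofReal_mul, ← Real.exp_add, ← mul_one_sub, norm_mul,
    Complex.norm_exp_I_mul_ofReal, one_mul, ← Complex.ofReal_one, ← Complex.ofReal_sub,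
    Complex.norm_real, Real.norm_eq_abs, neg_add_eq_sub]

end VarianceCutoff

namespace IsBddMartingaleDiff

variable {m0 : MeasurableSpace Ω} {μ : Measure Ω} {ℱ : Filtration ℕ m0}
  {d v : ℕ → Ω → ℝ} {c : ℝ}

section Scaling

variable {ι : Type*} {l : Filter ι} {N : ι → ℕ} {b : ι → ℝ}

section FiniteMeasure

variable [IsFiniteMeasure μ]

lemma mul_varCutoff (hd : IsBddMartingaleDiff μ ℱ d v c) (R : ℝ) :
    IsBddMartingaleDiff μ ℱ (fun k ω => varCutoff v R k ω * d k ω)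
      (fun k ω => varCutoff v R k ω ^ 2 * v k ω) c :=
  hd.mul_predictable
    (fun k => Measurable.ite (measurableSet_le (hd.measurable_sum_var k) measurable_const)
      measurable_const measurable_const)
    (abs_varCutoff_le_one v R)

lemma integrable_stoppedCompensatedExp (hd : IsBddMartingaleDiff μ ℱ d v c) {R : ℝ} (hR : 0 ≤ R)
    (r : ℝ) (n : ℕ) : Integrable (stoppedCompensatedExp d v R r n) μ :=
  (hd.mul_varCutoff R).integrable_compensatedExp
    (fun n ω => sum_varCutoff_sq_mul_le hR (hd.var_nonneg · ω) n) r n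

lemma integrable_exp_I_mul_sum (hd : IsBddMartingaleDiff μ ℱ d v c) (r : ℝ) (n : ℕ) :
    Integrable (fun ω => Complex.exp (Complex.I * (r * ∑ k ∈ range n, d k ω : ℝ))) μ := by
  have hmeas := (hd.measurable_sum n).mono (ℱ.le n) le_rfl
  exact .of_bound (Measurable.aestronglyMeasurable (by fun_prop)) 1
    (ae_of_all _ fun ω => (Complex.norm_exp_I_mul_ofReal _).le)

lemma tendsto_integral_exp_sub_stoppedCompensatedExp (hd : IsBddMartingaleDiff μ ℱ d v c)
    [l.IsCountablyGenerated] (hb : Tendsto b l atTop)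
    (hV : ∀ᵐ ω ∂μ, Tendsto (fun i => (∑ k ∈ range (N i), v k ω) / b i) l (𝓝 1)) (t : ℝ) :
    Tendsto (fun i => ∫ ω, (Complex.exp (Complex.I * (t / √(b i) * ∑ k ∈ range (N i), d k ω : ℝ))
      - Real.exp (-(t ^ 2 / 2)) * stoppedCompensatedExp d v (2 * b i) (t / √(b i)) (N i) ω) ∂μ)
      l (𝓝 0) := by
  have hbpos := hb.eventually_gt_atTop 0
  have hsq (i : ι) (hi : 0 < b i) : (t / √(b i)) ^ 2 = t ^ 2 / b i := by
    rw [div_pow, Real.sq_sqrt hi.le]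
  rw [← integral_zero Ω ℂ (μ := μ)]
  refine tendsto_integral_filter_of_dominated_convergence
    (fun _ => 1 + Real.exp (-(t ^ 2 / 2)) * Real.exp (t ^ 2)) ?_ ?_ (integrable_const _) ?_
  · filter_upwards [hbpos] with i hi
    exact ((hd.integrable_exp_I_mul_sum _ _).sub
      ((hd.integrable_stoppedCompensatedExp (by positivity) _ _).const_mul _)).aestronglyMeasurable
  · filter_upwards [hbpos] with i hi
    refine ae_of_all _ fun ω => (norm_sub_le _ _).trans ?_
    rw [Complex.norm_exp_I_mul_ofReal, norm_mul, Complex.norm_real,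
      Real.norm_of_nonneg (Real.exp_nonneg _)]
    have hU := norm_stoppedCompensatedExp_le (by positivity : 0 ≤ 2 * b i) (hd.var_nonneg · ω) d
      (t / √(b i)) (N i)
    rw [hsq i hi, show t ^ 2 / b i / 2 * (2 * b i) = t ^ 2 by field_simp] at hU
    gcongr
  · filter_upwards [hV] with ω hω
    have hexponent := (hω.const_mul (t ^ 2 / 2)).sub_const (t ^ 2 / 2)
    rw [mul_one, sub_self] at hexponent
    have hlim : Tendsto (fun i => |1 - Real.exp (t ^ 2 / 2 *
        ((∑ k ∈ range (N i), v k ω) / b i) - t ^ 2 / 2)|) l (𝓝 0) := by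
      simpa using (((Real.continuous_exp.tendsto 0).comp hexponent).const_sub 1).abs
    refine tendsto_zero_iff_norm_tendsto_zero.2 (hlim.congr' ?_)
    filter_upwards [hbpos, hω.eventually_le_const one_lt_two] with i hi hVi
    rw [stoppedCompensatedExp_eq (hd.var_nonneg · ω) d _ ((div_le_iff₀ hi).1 hVi),
      norm_exp_sub_mul_compensatedExp, hsq i hi]
    ring_nf

end FiniteMeasure

variable [IsProbabilityMeasure μ]

lemma tendsto_integral_stoppedCompensatedExp (hd : IsBddMartingaleDiff μ ℱ d v c)
    (hb : Tendsto b l atTop) (t : ℝ) :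
    Tendsto (fun i => ∫ ω, stoppedCompensatedExp d v (2 * b i) (t / √(b i)) (N i) ω ∂μ)
      l (𝓝 1) := by
  have hr : Tendsto (fun i => |t / √(b i)|) l (𝓝 0) := by
    simpa using ((Real.tendsto_sqrt_atTop.comp hb).const_div_atTop t).abs
  have hrc : Tendsto (fun i => |t / √(b i)| * c) l (𝓝 0) := by simpa using hr.mul_const c
  have hlim : Tendsto (fun i => 4 * Real.exp (t ^ 2) * t ^ 2 * (|t / √(b i)| * c)) l (𝓝 0) := by
    simpa using hrc.const_mul (4 * Real.exp (t ^ 2) * t ^ 2)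
  rw [tendsto_iff_norm_sub_tendsto_zero]
  refine squeeze_zero' (.of_forall fun i => norm_nonneg _) ?_ hlim
  filter_upwards [hb.eventually_gt_atTop 0, hrc.eventually_le_const one_pos] with i hbi hri
  have hsq : |t / √(b i)| ^ 2 * b i = t ^ 2 := by
    rw [sq_abs, div_pow, Real.sq_sqrt hbi.le, div_mul_cancel₀ _ hbi.ne']
  have hexp : (t / √(b i)) ^ 2 / 2 * (2 * b i) = t ^ 2 := by
    rw [← sq_abs (t / √(b i))]
    linear_combination hsq
  refine ((hd.mul_varCutoff (2 * b i)).norm_integral_compensatedExp_sub_one_le hri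
    (fun n ω => sum_varCutoff_sq_mul_le (by positivity) (hd.var_nonneg · ω) n) (N i)).trans_eq ?_
  rw [hexp]
  linear_combination 4 * Real.exp (t ^ 2) * |t / √(b i)| * c * hsq

lemma tendsto_integral_exp_I_mul_sum (hd : IsBddMartingaleDiff μ ℱ d v c)
    [l.IsCountablyGenerated] (hb : Tendsto b l atTop)
    (hV : ∀ᵐ ω ∂μ, Tendsto (fun i => (∑ k ∈ range (N i), v k ω) / b i) l (𝓝 1)) (t : ℝ) :
    Tendsto (fun i => ∫ ω, Complex.exp
      (Complex.I * (t / √(b i) * ∑ k ∈ range (N i), d k ω : ℝ)) ∂μ) l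
      (𝓝 (Real.exp (-(t ^ 2 / 2)) : ℂ)) := by
  have hstopped := (hd.tendsto_integral_stoppedCompensatedExp (N := N) hb t).const_mul
    (Real.exp (-(t ^ 2 / 2)) : ℂ)
  rw [mul_one] at hstopped
  rw [← zero_add (Real.exp (-(t ^ 2 / 2)) : ℂ)]
  refine ((hd.tendsto_integral_exp_sub_stoppedCompensatedExp hb hV t).add hstopped).congr' ?_
  filter_upwards [hb.eventually_gt_atTop 0] with i hi
  rw [integral_sub (hd.integrable_exp_I_mul_sum _ _)
    ((hd.integrable_stoppedCompensatedExp (by positivity) _ _).const_mul _), integral_const_mul,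
    sub_add_cancel]

end Scaling

variable [IsProbabilityMeasure μ]

/-- A central limit theorem for martingales. -/
theorem tendstoInDistribution_sum (hd : IsBddMartingaleDiff μ ℱ d v c) {b : ℕ → ℝ}
    (hb : Tendsto b atTop atTop)
    (hV : TendstoInMeasure μ (fun n ω => (∑ k ∈ range n, v k ω) / b n) atTop fun _ => 1) :
    TendstoInDistribution (fun n ω => (√(b n))⁻¹ * ∑ k ∈ range n, d k ω) atTop
      (id : ℝ → ℝ) (fun _ => μ) (gaussianReal 0 1) where
  forall_aemeasurable n :=
    (((hd.measurable_sum n).mono (ℱ.le n) le_rfl).const_mul _).aemeasurable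
  aemeasurable_limit := aemeasurable_id
  tendsto := by
    refine ProbabilityMeasure.tendsto_iff_tendsto_charFun.2 fun t => ?_
    have hgauss : charFun ((gaussianReal 0 1).map id) t = (Real.exp (-(t ^ 2 / 2)) : ℂ) := by
      rw [Measure.map_id, charFun_gaussianReal]
      push_cast
      congr 1
      ring
    have hsum (n : ℕ) : charFun (μ.map fun ω => (√(b n))⁻¹ * ∑ k ∈ range n, d k ω) t
        = ∫ ω, Complex.exp (Complex.I * (t / √(b n) * ∑ k ∈ range n, d k ω : ℝ)) ∂μ := by
      rw [charFun_apply_real, integral_map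
        (((hd.measurable_sum n).mono (ℱ.le n) le_rfl).const_mul _).aemeasurable (by fun_prop)]
      congr 1 with ω
      congr 1
      push_cast
      ring
    simp only [ProbabilityMeasure.coe_mk, hgauss, hsum]
    refine tendsto_of_subseq_tendsto fun N hN => ?_
    obtain ⟨φ, hφ, hVφ⟩ := (hV.comp hN).exists_seq_tendsto_ae'
    exact ⟨φ, hd.tendsto_integral_exp_I_mul_sum (N := N ∘ φ) ((hb.comp hN).comp hφ) hVφ t⟩

/-- Slutsky's theorem turns the central limit theorem into its self-normalized form. -/
lemma tendsto_integral_sum_sq_div (hd : IsBddMartingaleDiff μ ℱ d v c) {b : ℕ → ℝ}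
    {A : ℕ → Ω → ℝ} (hb : Tendsto b atTop atTop)
    (hV : TendstoInMeasure μ (fun n ω => (∑ k ∈ range n, v k ω) / b n) atTop fun _ => 1)
    (hAm : ∀ n, AEMeasurable (A n) μ)
    (hA : TendstoInMeasure μ (fun n ω => b n / A n ω) atTop fun _ => 1) (f : ℝ →ᵇ ℝ) :
    Tendsto (fun n => ∫ ω, f ((∑ k ∈ range n, d k ω) ^ 2 / A n ω) ∂μ) atTop
      (𝓝 (∫ x, f (x ^ 2) ∂(gaussianReal 0 1))) := by
  have hclt := hd.tendstoInDistribution_sum hb hV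
  have hprod := hclt.continuous_comp_prodMk_of_tendstoInMeasure_const
    (g := fun q : ℝ × ℝ => q.1 ^ 2 * q.2) (by fun_prop) hA (fun n => (hAm n).const_div _)
  have hint := ProbabilityMeasure.tendsto_iff_forall_integral_tendsto.1 hprod.tendsto f
  simp only [ProbabilityMeasure.coe_mk,
    integral_map (hprod.forall_aemeasurable _) f.continuous.aestronglyMeasurable] at hint
  rw [integral_map hprod.aemeasurable_limit f.continuous.aestronglyMeasurable] at hint
  simp only [id, mul_one] at hint
  refine hint.congr' ?_
  filter_upwards [hb.eventually_gt_atTop 0] with n hbn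
  refine integral_congr_ae (ae_of_all _ fun ω => congrArg f ?_)
  rw [mul_pow, inv_pow, Real.sq_sqrt hbn.le]
  field_simp

end IsBddMartingaleDiff

section Path

/-- The normalized position `S n / n`, which is `0 / 0 = 0` at time `0`. -/
def erwMean (X : ℕ → Ω → ℝ) (n : ℕ) (ω : Ω) : ℝ := erwS X n ω / n

/-- The accumulated energy `∑ k < n, (S k / k) ^ 2`, a quarter of `erwV`. -/
def erwEnergy (X : ℕ → Ω → ℝ) (n : ℕ) (ω : Ω) : ℝ := ∑ k ∈ range n, erwMean X k ω ^ 2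

/-- The score increments: the innovation `X (k + 1) - a * S k / k` weighted by `S k / k`. -/
def erwNoise (X : ℕ → Ω → ℝ) (a : ℝ) (k : ℕ) (ω : Ω) : ℝ :=
  erwMean X k ω * (X (k + 1) ω - a * erwMean X k ω)

/-- The conditional variance of `erwNoise X a k` when `a` is the true parameter `2 * p - 1`. -/
def erwNoiseVar (X : ℕ → Ω → ℝ) (a : ℝ) (k : ℕ) (ω : Ω) : ℝ :=
  erwMean X k ω ^ 2 * (1 - a ^ 2 * erwMean X k ω ^ 2)

/-- The lower-order term in the energy balance `erwMean_sq_add_erwEnergy`. -/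
def erwRemainder (X : ℕ → Ω → ℝ) (n : ℕ) (ω : Ω) : ℝ :=
  ∑ k ∈ range n, (erwMean X k ω ^ 2 - 2 * X (k + 1) ω * erwMean X k ω) * ((k : ℝ) + 1)⁻¹

variable {X : ℕ → Ω → ℝ} {a : ℝ} {ω : Ω}

lemma erwMean_zero (X : ℕ → Ω → ℝ) (ω : Ω) : erwMean X 0 ω = 0 := by simp [erwMean]

lemma erwMean_succ (X : ℕ → Ω → ℝ) (n : ℕ) (ω : Ω) :
    erwMean X (n + 1) ω = erwMean X n ω + (X (n + 1) ω - erwMean X n ω) * ((n : ℝ) + 1)⁻¹ := by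
  have hS : erwS X (n + 1) ω = erwS X n ω + X (n + 1) ω := sum_Icc_succ_top (by lia) _
  have hn : erwS X n ω = n * erwMean X n ω := by
    rcases eq_or_ne n 0 with rfl | hn
    · simp [erwS]
    · exact (mul_div_cancel₀ _ (Nat.cast_ne_zero.2 hn)).symm
  rw [erwMean, hS, hn, Nat.cast_succ]
  field_simp
  ring

lemma erwEnergy_mono (X : ℕ → Ω → ℝ) (ω : Ω) : Monotone fun n => erwEnergy X n ω :=
  fun _ _ h => sum_le_sum_of_subset_of_nonneg (range_mono h) fun _ _ _ => sq_nonneg _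

lemma erwEnergy_nonneg (X : ℕ → Ω → ℝ) (n : ℕ) (ω : Ω) : 0 ≤ erwEnergy X n ω :=
  sum_nonneg fun _ _ => sq_nonneg _

lemma abs_erwMean_le_one (hX : ∀ n, 1 ≤ n → |X n ω| = 1) (n : ℕ) : |erwMean X n ω| ≤ 1 := by
  rw [erwMean, abs_div, Nat.abs_cast]
  refine div_le_one_of_le₀ ((abs_sum_le_sum_abs _ _).trans_eq ?_) n.cast_nonneg
  rw [sum_congr rfl fun k hk => hX k (mem_Icc.1 hk).1]
  simp

lemma erwMean_sq_add_erwEnergy (hX : ∀ n, 1 ≤ n → |X n ω| = 1) (a : ℝ) (n : ℕ) :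
    n * erwMean X n ω ^ 2 + (1 - 2 * a) * erwEnergy X n ω
      = harmonic n + 2 * ∑ k ∈ range n, erwNoise X a k ω + erwRemainder X n ω := by
  induction n with
  | zero => simp [erwEnergy, erwRemainder]
  | succ n ih =>
    have hstep : X (n + 1) ω ^ 2 = 1 := by rw [← sq_abs, hX _ n.succ_pos, one_pow]
    have hinv : ((n : ℝ) + 1) * ((n : ℝ) + 1)⁻¹ = 1 := mul_inv_cancel₀ n.cast_add_one_ne_zero
    rw [erwMean_succ, erwEnergy, erwRemainder, sum_range_succ, sum_range_succ, sum_range_succ,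
      ← erwEnergy, ← erwRemainder, erwNoise, harmonic_succ]
    push_cast
    linear_combination ih + ((n : ℝ) + 1)⁻¹ * hstep + (2 * erwMean X n ω *
      (X (n + 1) ω - erwMean X n ω) + (X (n + 1) ω - erwMean X n ω) ^ 2 * ((n : ℝ) + 1)⁻¹) * hinv

lemma sum_range_inv_succ_sq_le (n : ℕ) : ∑ k ∈ range n, (((k : ℝ) + 1)⁻¹) ^ 2 ≤ 2 := by
  have h := sum_Ioo_inv_sq_le (α := ℝ) 0 (n + 1)
  rw [← Ico_succ_left_eq_Ioo, sum_Ico_eq_sum_range] at h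
  simpa [add_comm] using h

lemma erwRemainder_sq_le (hX : ∀ n, 1 ≤ n → |X n ω| = 1) (n : ℕ) :
    erwRemainder X n ω ^ 2 ≤ 18 * erwEnergy X n ω := by
  have hterm (k : ℕ) :
      (erwMean X k ω ^ 2 - 2 * X (k + 1) ω * erwMean X k ω) ^ 2 ≤ 9 * erwMean X k ω ^ 2 := by
    have hy := abs_le.1 (abs_erwMean_le_one hX k)
    have hx := abs_le.1 (hX (k + 1) k.succ_pos).le
    have hdiff : (erwMean X k ω - 2 * X (k + 1) ω) ^ 2 ≤ 3 ^ 2 :=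
      sq_le_sq' (by linarith) (by linarith)
    nlinarith [sq_nonneg (erwMean X k ω)]
  calc erwRemainder X n ω ^ 2
      ≤ (∑ k ∈ range n, (erwMean X k ω ^ 2 - 2 * X (k + 1) ω * erwMean X k ω) ^ 2)
          * ∑ k ∈ range n, (((k : ℝ) + 1)⁻¹) ^ 2 := sum_mul_sq_le_sq_mul_sq _ _ _
    _ ≤ (∑ k ∈ range n, 9 * erwMean X k ω ^ 2) * 2 := by
        gcongr with k
        · exact hterm k
        · exact sum_range_inv_succ_sq_le n
    _ = 18 * erwEnergy X n ω := by
        rw [← mul_sum, erwEnergy]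
        ring

lemma tendsto_harmonic_atTop : Tendsto (fun n => (harmonic n : ℝ)) atTop atTop :=
  tendsto_atTop_mono log_add_one_le_harmonic <|
    Real.tendsto_log_atTop.comp <| tendsto_natCast_atTop_atTop.comp (tendsto_add_atTop_nat 1)

lemma harmonic_nonneg (n : ℕ) : (0 : ℝ) ≤ harmonic n :=
  Rat.cast_nonneg.2 (sum_nonneg fun _ _ => by positivity)

lemma harmonic_le_natCast (n : ℕ) : harmonic n ≤ n := by
  refine (sum_le_card_nsmul _ _ 1 fun k _ => ?_).trans (by simp)
  exact inv_le_one_of_one_le₀ (by simp)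

/-- Were the energy bounded, the energy balance would force `k * (S k / k) ^ 2 → ∞`, and the
energy would dominate the harmonic series. -/
lemma tendsto_erwEnergy_atTop (hX : ∀ n, 1 ≤ n → |X n ω| = 1)
    (hM : (fun n => ∑ k ∈ range n, erwNoise X a k ω) =O[atTop] fun n => 1 + erwEnergy X n ω) :
    Tendsto (fun n => erwEnergy X n ω) atTop atTop := by
  refine (tendsto_atTop_of_monotone (erwEnergy_mono X ω)).resolve_right fun ⟨s, hs⟩ => ?_
  have hE : (fun n => erwEnergy X n ω) =O[atTop] fun _ => (1 : ℝ) := hs.isBigO_one ℝ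
  have hM1 : (fun n => ∑ k ∈ range n, erwNoise X a k ω) =O[atTop] fun _ => (1 : ℝ) :=
    hM.trans ((isBigO_refl _ _).add hE)
  have hR : (fun n => erwRemainder X n ω) =O[atTop] fun _ => (1 : ℝ) := by
    refine IsBigO.of_pow two_ne_zero ?_
    simp only [Pi.pow_def, one_pow]
    refine (isBigO_of_le _ fun n => ?_).trans (hE.const_mul_left 18)
    rw [Real.norm_of_nonneg (sq_nonneg _)]
    exact (erwRemainder_sq_le hX n).trans (le_abs_self _)
  obtain ⟨C, hC⟩ := ((hM1.const_mul_left 2).add hR |>.sub (hE.const_mul_left (1 - 2 * a))).bound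
  have hlarge : ∀ᶠ n : ℕ in atTop, (1 : ℝ) / n ≤ erwMean X n ω ^ 2 := by
    filter_upwards [hC, tendsto_harmonic_atTop.eventually_ge_atTop (1 + C), eventually_gt_atTop 0]
      with n hn hHn hn0
    rw [norm_one, mul_one, Real.norm_eq_abs] at hn
    rw [div_le_iff₀ (by exact_mod_cast hn0)]
    linarith [erwMean_sq_add_erwEnergy hX a n, (abs_le.1 hn).1]
  have hsum : Summable fun n => erwMean X n ω ^ 2 :=
    summable_of_sum_range_le (fun n => sq_nonneg _) ((erwEnergy_mono X ω).ge_of_tendsto hs)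
  refine Real.not_summable_one_div_natCast (hsum.of_norm_bounded_eventually_nat ?_)
  filter_upwards [hlarge] with n hn
  rwa [Real.norm_of_nonneg (by positivity)]

section LogarithmicGrowth

lemma erwRemainder_isLittleO (hX : ∀ n, 1 ≤ n → |X n ω| = 1)
    (hE : Tendsto (fun n => erwEnergy X n ω) atTop atTop) :
    (fun n => erwRemainder X n ω) =o[atTop] fun n => erwEnergy X n ω := by
  refine IsLittleO.of_pow (n := 2) ?_ two_ne_zero
  have hsq : (fun n => erwRemainder X n ω ^ 2) =O[atTop] fun n => erwEnergy X n ω :=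
    .of_bound 18 <| .of_forall fun n => by
      rw [Real.norm_of_nonneg (sq_nonneg _), Real.norm_of_nonneg (erwEnergy_nonneg X n ω)]
      exact erwRemainder_sq_le hX n
  have hpow : (fun n => erwEnergy X n ω) =o[atTop] fun n => erwEnergy X n ω ^ 2 := by
    simpa [Function.comp_def] using
      (isLittleO_pow_pow_atTop_of_lt (𝕜 := ℝ) one_lt_two).comp_tendsto hE
  exact hsq.trans_isLittleO hpow

variable (hX : ∀ n, 1 ≤ n → |X n ω| = 1) (hE : Tendsto (fun n => erwEnergy X n ω) atTop atTop)
  (hM : (fun n => ∑ k ∈ range n, erwNoise X a k ω) =o[atTop] fun n => erwEnergy X n ω)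
  (ha : a < 1 / 2)

include hX hE hM ha

lemma erwEnergy_isEquivalent :
    (fun n => (1 - 2 * a) * erwEnergy X n ω) ~[atTop] fun n => (harmonic n : ℝ) := by
  have hc : 0 < 1 - 2 * a := by linarith
  have hmono : Monotone fun n => (harmonic n : ℝ) := monotone_nat_of_le_succ fun n => by
    rw [harmonic_succ, Rat.cast_add]
    exact le_add_of_nonneg_right (by positivity)
  have hlast : (fun n : ℕ => (n : ℝ) / (n + 1)) =o[atTop] fun n => erwEnergy X n ω :=
    tendsto_natCast_div_add_atTop (1 : ℝ) |>.isBigO_one ℝ |>.trans_isLittleO <|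
      isLittleO_const_left.2 (.inr (tendsto_norm_atTop_atTop.comp hE))
  have hEO : (fun n => erwEnergy X n ω) =O[atTop]
      fun n => |(1 - 2 * a) * erwEnergy X n ω - harmonic n| + harmonic n := by
    refine .of_bound (1 - 2 * a)⁻¹ (.of_forall fun n => ?_)
    rw [Real.norm_of_nonneg (erwEnergy_nonneg X n ω), inv_mul_eq_div, le_div_iff₀' hc]
    refine le_trans ?_ (le_abs_self _)
    linarith [le_abs_self ((1 - 2 * a) * erwEnergy X n ω - harmonic n)]
  refine isLittleO_of_averaging_recurrence hc hmono tendsto_harmonic_atTop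
    (((hM.const_mul_left 2).add (erwRemainder_isLittleO hX hE)).const_mul_left (1 - 2 * a)
      |>.sub hlast |>.trans_isBigO hEO) fun n => ?_
  have hbal := erwMean_sq_add_erwEnergy hX a n
  simp only [Pi.sub_apply, erwEnergy, sum_range_succ, harmonic_succ] at hbal ⊢
  push_cast
  linear_combination (1 - 2 * a) * hbal

lemma tendsto_erwMean_sq : Tendsto (fun n => erwMean X n ω ^ 2) atTop (𝓝 0) := by
  have hEH := erwEnergy_isEquivalent hX hE hM ha
  have hEO : (fun n => erwEnergy X n ω) =O[atTop] fun n => (harmonic n : ℝ) :=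
    (isBigO_const_mul_left_iff (by linarith : 1 - 2 * a ≠ 0)).1 hEH.isBigO
  have hH : (fun n => (harmonic n : ℝ)) =O[atTop] fun n : ℕ => (n : ℝ) :=
    .of_bound 1 <| .of_forall fun n => by
      rw [one_mul, Real.norm_of_nonneg (harmonic_nonneg n), Real.norm_natCast]
      exact_mod_cast harmonic_le_natCast n
  have hny : (fun n => n * erwMean X n ω ^ 2) =o[atTop] fun n : ℕ => (n : ℝ) := by
    refine (((hM.const_mul_left 2).add (erwRemainder_isLittleO hX hE) |>.trans_isBigO hEO).sub
      hEH.isLittleO).trans_isBigO hH |>.congr_left fun n => ?_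
    simp only [Pi.sub_apply]
    linear_combination -erwMean_sq_add_erwEnergy hX a n
  refine hny.tendsto_div_nhds_zero.congr' ?_
  filter_upwards [eventually_gt_atTop 0] with n hn
  field_simp

lemma sum_erwNoiseVar_isEquivalent :
    (fun n => ∑ k ∈ range n, erwNoiseVar X a k ω) ~[atTop] fun n => erwEnergy X n ω := by
  have hfour : (fun n => erwMean X n ω ^ 2 * (a ^ 2 * erwMean X n ω ^ 2)) =o[atTop]
      fun n => erwMean X n ω ^ 2 := by
    simpa using (isBigO_refl (fun n => erwMean X n ω ^ 2) atTop).mul_isLittleO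
      ((isLittleO_one_iff ℝ).2
        (by simpa using (tendsto_erwMean_sq hX hE hM ha).const_mul (a ^ 2)))
  refine (hfour.sum_range (fun n => sq_nonneg _) hE).neg_left.congr_left fun n => ?_
  rw [Pi.sub_apply, erwEnergy, ← sum_sub_distrib, ← sum_neg_distrib]
  refine sum_congr rfl fun k _ => ?_
  rw [erwNoiseVar]
  ring

end LogarithmicGrowth

end Path

section Statistic

variable {X : ℕ → Ω → ℝ} {ω : Ω}

lemma sum_Icc_one_pred_eq_sum_range {M : Type*} [AddCommMonoid M] {f : ℕ → M} (hf : f 0 = 0)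
    (n : ℕ) : ∑ k ∈ Icc 1 (n - 1), f k = ∑ k ∈ range n, f k := by
  refine sum_subset (fun k hk => ?_) fun k hk hk' => ?_
  · simp only [mem_Icc, mem_range] at hk ⊢
    lia
  · obtain rfl : k = 0 := by
      simp only [mem_Icc, mem_range] at hk hk'
      lia
    exact hf

lemma erwV_eq (X : ℕ → Ω → ℝ) (n : ℕ) (ω : Ω) : erwV X n ω = 4 * erwEnergy X n ω := by
  rw [erwV, sum_Icc_one_pred_eq_sum_range (by simp)]
  rfl

lemma erwPhat_eq (X : ℕ → Ω → ℝ) (p : ℝ) (n : ℕ) (ω : Ω) :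
    erwPhat X n ω = (∑ k ∈ range n, erwNoise X (2 * p - 1) k ω + 2 * p * erwEnergy X n ω)
      / (2 * erwEnergy X n ω) := by
  rw [erwPhat, sum_Icc_one_pred_eq_sum_range (by simp), sum_Icc_one_pred_eq_sum_range (by simp)]
  simp only [erwEnergy, mul_sum (range n), ← sum_add_distrib]
  congr 1
  refine sum_congr rfl fun k _ => ?_
  rw [← erwMean, erwNoise]
  ring

/-- When the energy vanishes, both sides are zero by the convention `x / 0 = 0`. -/
lemma erwV_mul_erwPhat_sub_sq (X : ℕ → Ω → ℝ) (p p₀ : ℝ) (n : ℕ) (ω : Ω) :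
    erwV X n ω * (erwPhat X n ω - p₀) ^ 2 = erwEnergy X n ω *
      ((∑ k ∈ range n, erwNoise X (2 * p - 1) k ω) / erwEnergy X n ω + 2 * (p - p₀)) ^ 2 := by
  rw [erwV_eq, erwPhat_eq X p]
  rcases eq_or_ne (erwEnergy X n ω) 0 with h | h
  · simp [h]
  · field_simp
    ring

lemma erwV_mul_erwPhat_sub_sq_self (X : ℕ → Ω → ℝ) (p : ℝ) (n : ℕ) (ω : Ω) :
    erwV X n ω * (erwPhat X n ω - p) ^ 2
      = (∑ k ∈ range n, erwNoise X (2 * p - 1) k ω) ^ 2 / erwEnergy X n ω := by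
  rw [erwV_mul_erwPhat_sub_sq X p, sub_self, mul_zero, add_zero]
  rcases eq_or_ne (erwEnergy X n ω) 0 with h | h
  · simp [h]
  · field_simp

lemma tendsto_erwV_mul_erwPhat_sub_sq_atTop {p p₀ : ℝ} (hp : p₀ ≠ p)
    (hE : Tendsto (fun n => erwEnergy X n ω) atTop atTop)
    (hM : (fun n => ∑ k ∈ range n, erwNoise X (2 * p - 1) k ω) =o[atTop]
      fun n => erwEnergy X n ω) :
    Tendsto (fun n => erwV X n ω * (erwPhat X n ω - p₀) ^ 2) atTop atTop := by
  simp only [erwV_mul_erwPhat_sub_sq X p p₀]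
  have hlim : (0 + 2 * (p - p₀)) ≠ 0 := by simpa [sub_eq_zero] using hp.symm
  exact hE.atTop_mul_pos (sq_pos_of_ne_zero hlim)
    ((hM.tendsto_div_nhds_zero.add_const (2 * (p - p₀))).pow 2)

end Statistic

namespace IsERW

variable {m0 : MeasurableSpace Ω} {μ : Measure Ω} {ℱ : Filtration ℕ m0} {X : ℕ → Ω → ℝ} {p : ℝ}

lemma measurable_step (h : IsERW μ ℱ X p) {n : ℕ} (hn : 1 ≤ n) : Measurable[ℱ n] (X n) :=
  h.2.2.2.1 n hn

lemma abs_step (h : IsERW μ ℱ X p) (n : ℕ) (hn : 1 ≤ n) (ω : Ω) : |X n ω| = 1 := by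
  rcases h.2.2.1 n hn ω with hX | hX <;> simp [hX]

lemma condExp_step (h : IsERW μ ℱ X p) {n : ℕ} (hn : 1 ≤ n) :
    μ[X (n + 1) | ℱ n] =ᵐ[μ] fun ω => (2 * p - 1) * erwMean X n ω :=
  h.2.2.2.2 n hn

lemma measurable_erwMean (h : IsERW μ ℱ X p) (n : ℕ) : Measurable[ℱ n] (erwMean X n) :=
  (Finset.measurable_fun_sum _ fun _ hk => (h.measurable_step (mem_Icc.1 hk).1).mono
    (ℱ.mono (mem_Icc.1 hk).2) le_rfl).div_const _

lemma measurable_erwEnergy (h : IsERW μ ℱ X p) (n : ℕ) : Measurable[ℱ n] (erwEnergy X n) :=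
  Finset.measurable_fun_sum _ fun k hk =>
    ((h.measurable_erwMean k).mono (ℱ.mono (mem_range.1 hk).le) le_rfl).pow_const 2

lemma erwMean_sq_le_one (h : IsERW μ ℱ X p) (n : ℕ) (ω : Ω) : erwMean X n ω ^ 2 ≤ 1 := by
  rw [← sq_abs]
  exact pow_le_one₀ (abs_nonneg _) (abs_erwMean_le_one (h.abs_step · · ω) n)

lemma abs_two_mul_sub_one_le (h : IsERW μ ℱ X p) : |2 * p - 1| ≤ 1 :=
  abs_le.2 ⟨by linarith [h.1], by linarith [h.2.1]⟩

variable [IsFiniteMeasure μ]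

lemma condExp_add_mul_step (h : IsERW μ ℱ X p) {n : ℕ} (hn : 1 ≤ n) {f g : Ω → ℝ}
    (hf : Measurable[ℱ n] f) (hg : Measurable[ℱ n] g) {C : ℝ} (hfC : ∀ ω, |f ω| ≤ C)
    (hgC : ∀ ω, |g ω| ≤ C) :
    μ[fun ω => f ω + g ω * X (n + 1) ω | ℱ n] =ᵐ[μ]
      fun ω => f ω + g ω * ((2 * p - 1) * erwMean X n ω) := by
  have hXint : Integrable (X (n + 1)) μ :=
    .of_bound ((h.measurable_step n.succ_pos).mono (ℱ.le _) le_rfl).aestronglyMeasurable 1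
      (ae_of_all _ fun ω => (h.abs_step _ n.succ_pos ω).le)
  have hfint : Integrable f μ :=
    .of_bound (hf.mono (ℱ.le n) le_rfl).aestronglyMeasurable C (ae_of_all _ hfC)
  have hgXint : Integrable (fun ω => g ω * X (n + 1) ω) μ :=
    hXint.bdd_mul (hg.mono (ℱ.le n) le_rfl).aestronglyMeasurable (ae_of_all _ hgC)
  filter_upwards [condExp_add hfint hgXint (ℱ n), h.condExp_step hn,
    condExp_stronglyMeasurable_mul_of_bound (ℱ.le n) hg.stronglyMeasurable hXint C
      (ae_of_all _ hgC)] with ω hadd hstep hpull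
  refine hadd.trans ?_
  rw [Pi.add_apply, condExp_of_stronglyMeasurable (ℱ.le n) hf.stronglyMeasurable hfint]
  exact congrArg (f ω + ·) (hpull.trans (congrArg (g ω * ·) hstep))

lemma condExp_erwNoise (h : IsERW μ ℱ X p) (n : ℕ) :
    μ[erwNoise X (2 * p - 1) n | ℱ n] =ᵐ[μ] 0 := by
  rcases Nat.eq_zero_or_pos n with rfl | hn
  · have h0 : erwNoise X (2 * p - 1) 0 = 0 := by
      ext ω
      simp [erwNoise, erwMean_zero]
    rw [h0, condExp_zero]
  have hY := h.measurable_erwMean n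
  have hsplit : erwNoise X (2 * p - 1) n =
      fun ω => -(2 * p - 1) * erwMean X n ω ^ 2 + erwMean X n ω * X (n + 1) ω := by
    ext ω
    rw [erwNoise]
    ring
  rw [hsplit]
  refine (h.condExp_add_mul_step hn ((hY.pow_const 2).const_mul _) hY (C := 1) (fun ω => ?_)
    fun ω => abs_erwMean_le_one (h.abs_step · · ω) n).trans (.of_forall fun ω => ?_)
  · rw [abs_mul, abs_neg, abs_sq]
    exact mul_le_one₀ h.abs_two_mul_sub_one_le (sq_nonneg _) (h.erwMean_sq_le_one n ω)
  · simp only [Pi.zero_apply]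
    ring

lemma condExp_erwNoise_sq (h : IsERW μ ℱ X p) (n : ℕ) :
    μ[fun ω => erwNoise X (2 * p - 1) n ω ^ 2 | ℱ n] =ᵐ[μ] erwNoiseVar X (2 * p - 1) n := by
  rcases Nat.eq_zero_or_pos n with rfl | hn
  · have h0 : (fun ω => erwNoise X (2 * p - 1) 0 ω ^ 2) = 0 := by
      ext ω
      simp [erwNoise, erwMean_zero]
    rw [h0, condExp_zero]
    exact .of_forall fun ω => by simp [erwNoiseVar, erwMean_zero]
  have hY := h.measurable_erwMean n
  have ha := h.abs_two_mul_sub_one_le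
  have hsplit : (fun ω => erwNoise X (2 * p - 1) n ω ^ 2) = fun ω =>
      (erwMean X n ω ^ 2 + ((2 * p - 1) * erwMean X n ω ^ 2) ^ 2)
        + -(2 * (2 * p - 1)) * erwMean X n ω ^ 3 * X (n + 1) ω := by
    ext ω
    have hstep : X (n + 1) ω ^ 2 = 1 := by rw [← sq_abs, h.abs_step _ n.succ_pos, one_pow]
    rw [erwNoise]
    linear_combination erwMean X n ω ^ 2 * hstep
  have hf : Measurable[ℱ n] fun ω =>
      erwMean X n ω ^ 2 + ((2 * p - 1) * erwMean X n ω ^ 2) ^ 2 :=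
    (hY.pow_const 2).add (((hY.pow_const 2).const_mul _).pow_const 2)
  rw [hsplit]
  refine (h.condExp_add_mul_step hn (C := 2) hf
    ((hY.pow_const 3).const_mul _) (fun ω => ?_) fun ω => ?_).trans (.of_forall fun ω => ?_)
  · have hprod : |(2 * p - 1) * erwMean X n ω ^ 2| ≤ 1 := by
      rw [abs_mul, abs_sq]
      exact mul_le_one₀ ha (sq_nonneg _) (h.erwMean_sq_le_one n ω)
    rw [abs_of_nonneg (by positivity)]
    linarith [h.erwMean_sq_le_one n ω, (sq_le_one_iff_abs_le_one _).2 hprod]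
  · rw [abs_mul, abs_neg, abs_mul, abs_two, abs_pow]
    have hcube := pow_le_one₀ (abs_nonneg _) (abs_erwMean_le_one (h.abs_step · · ω) n) (n := 3)
    linarith [mul_le_one₀ ha (by positivity) hcube]
  · rw [erwNoiseVar]
    ring

lemma isBddMartingaleDiff (h : IsERW μ ℱ X p) :
    IsBddMartingaleDiff μ ℱ (erwNoise X (2 * p - 1)) (erwNoiseVar X (2 * p - 1)) 2 where
  measurable_diff n := by
    have hX := h.measurable_step n.succ_pos
    have hY := (h.measurable_erwMean n).mono (ℱ.mono n.le_succ) le_rfl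
    exact hY.mul (hX.sub (hY.const_mul _))
  measurable_var n := by
    have hY := (h.measurable_erwMean n).pow_const 2
    exact hY.mul ((hY.const_mul _).const_sub 1)
  abs_le n ω := by
    have hY := abs_erwMean_le_one (h.abs_step · · ω) n
    have ha := h.abs_two_mul_sub_one_le
    calc |erwNoise X (2 * p - 1) n ω|
        ≤ 1 * (|X (n + 1) ω| + |2 * p - 1| * |erwMean X n ω|) := by
          rw [erwNoise, abs_mul, ← abs_mul (2 * p - 1)]
          exact mul_le_mul hY (abs_sub _ _) (abs_nonneg _) zero_le_one
      _ ≤ 2 := by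
          rw [h.abs_step _ n.succ_pos]
          nlinarith [abs_nonneg (erwMean X n ω)]
  var_nonneg n ω := by
    have ha : (2 * p - 1) ^ 2 ≤ 1 := by
      rw [← sq_abs]
      exact pow_le_one₀ (abs_nonneg _) h.abs_two_mul_sub_one_le
    have := mul_le_one₀ ha (sq_nonneg _) (h.erwMean_sq_le_one n ω)
    exact mul_nonneg (sq_nonneg _) (sub_nonneg.2 this)
  condExp_diff := h.condExp_erwNoise
  condExp_sq := h.condExp_erwNoise_sq

lemma ae_tendsto_erwEnergy_and_isLittleO (h : IsERW μ ℱ X p) : ∀ᵐ ω ∂μ,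
    Tendsto (fun n => erwEnergy X n ω) atTop atTop ∧
    (fun n => ∑ k ∈ range n, erwNoise X (2 * p - 1) k ω) =o[atTop] fun n => erwEnergy X n ω := by
  have hmeas (k : ℕ) : Measurable[ℱ k] fun ω => erwMean X k ω ^ 2 :=
    (h.measurable_erwMean k).pow_const 2
  have hle (k : ℕ) (ω : Ω) : erwNoiseVar X (2 * p - 1) k ω ≤ erwMean X k ω ^ 2 :=
    mul_le_of_le_one_right (sq_nonneg _) (sub_le_self _ (by positivity))
  filter_upwards [h.isBddMartingaleDiff.ae_sum_isBigO hmeas hle,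
    h.isBddMartingaleDiff.ae_sum_isLittleO hmeas hle] with ω hO ho
  have hE := tendsto_erwEnergy_atTop (h.abs_step · · ω) hO
  exact ⟨hE, ho hE⟩

lemma ae_erwEnergy_and_sum_erwNoiseVar_isEquivalent (h : IsERW μ ℱ X p) (hp : p < 3 / 4) :
    ∀ᵐ ω ∂μ,
      (fun n => erwEnergy X n ω) ~[atTop] (fun n => (3 - 4 * p)⁻¹ * (harmonic n : ℝ)) ∧
      (fun n => ∑ k ∈ range n, erwNoiseVar X (2 * p - 1) k ω) ~[atTop]
        (fun n => (3 - 4 * p)⁻¹ * (harmonic n : ℝ)) := by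
  have ha : 2 * p - 1 < 1 / 2 := by linarith
  have hc : 3 - 4 * p ≠ 0 := by linarith
  filter_upwards [h.ae_tendsto_erwEnergy_and_isLittleO] with ω ⟨hE, hM⟩
  have hEH : (fun n => (3 - 4 * p) * erwEnergy X n ω) ~[atTop] fun n => (harmonic n : ℝ) := by
    convert erwEnergy_isEquivalent (h.abs_step · · ω) hE hM ha using 3
    ring
  have hEb : (fun n => erwEnergy X n ω) ~[atTop] fun n => (3 - 4 * p)⁻¹ * (harmonic n : ℝ) := by
    simpa only [Pi.mul_def, inv_mul_cancel_left₀ hc] using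
      (IsEquivalent.refl (u := fun _ => (3 - 4 * p)⁻¹)).mul hEH
  exact ⟨hEb, (sum_erwNoiseVar_isEquivalent (h.abs_step · · ω) hE hM ha).trans hEb⟩

end IsERW

lemma IsERW.tendsto_integral_erwV_mul_erwPhat_sub_sq {m0 : MeasurableSpace Ω} {μ : Measure Ω}
    [IsProbabilityMeasure μ] {ℱ : Filtration ℕ m0} {X : ℕ → Ω → ℝ} {p : ℝ}
    (h : IsERW μ ℱ X p) (hp : p < 3 / 4) (f : ℝ →ᵇ ℝ) :
    Tendsto (fun n => ∫ ω, f (erwV X n ω * (erwPhat X n ω - p) ^ 2) ∂μ) atTop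
      (𝓝 (∫ x, f (x ^ 2) ∂(gaussianReal 0 1))) := by
  have hb : Tendsto (fun n => (3 - 4 * p)⁻¹ * (harmonic n : ℝ)) atTop atTop :=
    tendsto_harmonic_atTop.const_mul_atTop (inv_pos.2 (by linarith))
  have hEm (n : ℕ) : Measurable (erwEnergy X n) := (h.measurable_erwEnergy n).mono (ℱ.le n) le_rfl
  have hVm (n : ℕ) : Measurable fun ω => ∑ k ∈ range n, erwNoiseVar X (2 * p - 1) k ω :=
    Finset.measurable_fun_sum _ fun k _ =>
      (h.isBddMartingaleDiff.measurable_var k).mono (ℱ.le k) le_rfl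
  simp only [erwV_mul_erwPhat_sub_sq_self]
  refine h.isBddMartingaleDiff.tendsto_integral_sum_sq_div hb
    (tendstoInMeasure_of_tendsto_ae (fun n => ((hVm n).div_const _).aestronglyMeasurable) ?_)
    (fun n => (hEm n).aemeasurable)
    (tendstoInMeasure_of_tendsto_ae (fun n => ((hEm n).const_div _).aestronglyMeasurable) ?_) f
  · filter_upwards [h.ae_erwEnergy_and_sum_erwNoiseVar_isEquivalent hp] with ω ⟨_, hV⟩
    exact (isEquivalent_iff_tendsto_one (hb.eventually_ne_atTop 0)).1 hV
  · filter_upwards [h.ae_erwEnergy_and_sum_erwNoiseVar_isEquivalent hp,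
      h.ae_tendsto_erwEnergy_and_isLittleO] with ω ⟨hEb, _⟩ ⟨hE, _⟩
    exact (isEquivalent_iff_tendsto_one (hE.eventually_ne_atTop 0)).1 hEb.symm

theorem erw_test_memory_value_general {m0 : MeasurableSpace Ω} {μ : Measure Ω}
    [IsProbabilityMeasure μ] {ℱ : Filtration ℕ m0} {X : ℕ → Ω → ℝ} {p : ℝ}
    (hERW : IsERW μ ℱ X p) :
    (p < 3 / 4 → ∀ f : ℝ →ᵇ ℝ,
      Tendsto (fun n => ∫ ω, f (erwV X n ω * (erwPhat X n ω - p) ^ 2) ∂μ) atTop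
        (𝓝 (∫ x, f (x ^ 2) ∂(gaussianReal 0 1)))) ∧
    ∀ᵐ ω ∂μ, ∀ p₀, p₀ ≠ p →
      Tendsto (fun n => erwV X n ω * (erwPhat X n ω - p₀) ^ 2) atTop atTop := by
  refine ⟨hERW.tendsto_integral_erwV_mul_erwPhat_sub_sq, ?_⟩
  filter_upwards [hERW.ae_tendsto_erwEnergy_and_isLittleO] with ω ⟨hE, hM⟩ p₀ hp₀
  exact tendsto_erwV_mul_erwPhat_sub_sq_atTop hp₀ hE hM

/-- Test of a given memory value `p₀ ∈ (0, 3/4)`: under the null `p = p₀`,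
`V_n (p̂_n - p₀)²` converges in distribution to a chi-square law with one degree of
freedom (the law of `ξ²` for `ξ` standard Gaussian); under the alternative `p ≠ p₀`,
`V_n (p̂_n - p₀)² → +∞` almost surely. -/
theorem erw_test_memory_value
    {m0 : MeasurableSpace Ω} (μ : Measure Ω) [IsProbabilityMeasure μ]
    (ℱ : Filtration ℕ m0) (X : ℕ → Ω → ℝ) (p : ℝ)
    (hERW : IsERW μ ℱ X p) (p₀ : ℝ) (hp₀ : 0 < p₀) (hp₀' : p₀ < 3 / 4) :
    (p = p₀ → ∀ f : ℝ →ᵇ ℝ,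
      Tendsto (fun n => ∫ ω, f (erwV X n ω * (erwPhat X n ω - p₀) ^ 2) ∂μ)
        atTop (𝓝 (∫ x, f (x ^ 2) ∂(gaussianReal 0 1)))) ∧
    (p ≠ p₀ →
      ∀ᵐ ω ∂μ, Tendsto (fun n => erwV X n ω * (erwPhat X n ω - p₀) ^ 2) atTop atTop) := by
  obtain ⟨hnull, halt⟩ := erw_test_memory_value_general hERW
  exact ⟨fun h => h ▸ hnull (h.trans_lt hp₀'), fun h => halt.mono fun ω hω => hω p₀ h.symm⟩
end
end
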